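/- In dimension 12, every finite set S of points on the unit sphere of EuclideanSpace ℝ (Fin 12) (i.e., ‖x‖ = 1 for all x ∈ S) such that any two distinct points of S are at Euclidean distance at least 1 has cardinality at most 1357; that is, the kissing number in dimension 12 is at most 1357. -/

import Mathlib

namespace Kiss
open MvPolynomial

section geg
variable {ι : Type} [Fintype ι] [DecidableEq ι]

noncomputable def fw (α : ι →₀ ℕ) : ℝ := ∏ i, ((α i).factorial : ℝ)

lemma fw_nonneg (α : ι →₀ ℕ) : 0 ≤ fw α := by unfold fw; positivity

noncomputable def fB : MvPolynomial ι ℝ →ₗ[ℝ] MvPolynomial ι ℝ →ₗ[ℝ] ℝ :=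
  (basisMonomials ι ℝ).constr ℝ (fun α => fw α • lcoeff ℝ α)

lemma fB_monomial (α : ι →₀ ℕ) (r : ℝ) (q : MvPolynomial ι ℝ) :
    fB (monomial α r) q = r * (fw α * coeff α q) := by
  have h : (monomial α r : MvPolynomial ι ℝ) = r • (basisMonomials ι ℝ α) := by
    simp [smul_monomial]
  rw [h, map_smul, fB, Module.Basis.constr_basis]
  simp [lcoeff]

lemma fB_self (p : MvPolynomial ι ℝ) : 0 ≤ fB p p := by
  have h : fB p p = ∑ α ∈ p.support, coeff α p * (fw α * coeff α p) := by
    conv_lhs => rw [show fB p p = fB (∑ α ∈ p.support, monomial α (coeff α p)) p by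
      rw [← p.as_sum]]
    rw [map_sum, LinearMap.sum_apply]
    exact Finset.sum_congr rfl fun α _ => fB_monomial _ _ _
  rw [h]
  refine Finset.sum_nonneg fun α _ => ?_
  have := fw_nonneg α
  nlinarith [mul_nonneg this (mul_self_nonneg (coeff α p))]

lemma fw_add (α : ι →₀ ℕ) (i : ι) :
    fw (α + Finsupp.single i 1) = (α i + 1) * fw α := by
  unfold fw
  rw [← Finset.mul_prod_erase _ _ (Finset.mem_univ i),
    ← Finset.mul_prod_erase (Finset.univ) (fun j => ((α j).factorial : ℝ)) (Finset.mem_univ i)]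
  have : ∏ x ∈ Finset.univ.erase i, (((α + Finsupp.single i 1 : ι →₀ ℕ) x).factorial : ℝ)
      = ∏ x ∈ Finset.univ.erase i, ((α x).factorial : ℝ) := by
    refine Finset.prod_congr rfl fun j hj => ?_
    have : i ≠ j := (Finset.ne_of_mem_erase hj).symm
    simp [Finsupp.single_apply, this]
  rw [this]
  simp [Nat.factorial_succ]
  ring

lemma coeff_pd (i : ι) (q : MvPolynomial ι ℝ) (α : ι →₀ ℕ) :
    coeff α (pderiv i q) = (α i + 1) * coeff (α + Finsupp.single i 1) q := by
  induction q using MvPolynomial.induction_on' with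
  | monomial β r =>
    rw [pderiv_monomial, coeff_monomial, coeff_monomial]
    by_cases h : β = α + Finsupp.single i 1
    · subst h; simp; ring
    · rw [if_neg h, mul_zero]
      split_ifs with h2
      · by_cases h3 : β i = 0
        · simp [h3]
        · exfalso; apply h
          ext j
          have := DFunLike.congr_fun h2 j
          by_cases hj : i = j
          · subst hj; simp at this ⊢; omega
          · simp [Finsupp.single_apply, hj] at this ⊢; omega
      · rfl
  | add p q hp hq => simp only [map_add, coeff_add, hp, hq]; ring

lemma fB_X (i : ι) (p q : MvPolynomial ι ℝ) : fB (X i * p) q = fB p (pderiv i q) := by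
  induction p using MvPolynomial.induction_on' with
  | monomial α r =>
    have : (X i * monomial α r : MvPolynomial ι ℝ) = monomial (α + Finsupp.single i 1) r := by
      rw [X, monomial_mul, add_comm, one_mul]
    rw [this, fB_monomial, fB_monomial, fw_add, coeff_pd]; ring
  | add p q hp hq => simp only [mul_add, map_add, LinearMap.add_apply, hp, hq]

noncomputable def lin (a : ι → ℝ) : MvPolynomial ι ℝ := ∑ i, C (a i) * X i
noncomputable def rho : MvPolynomial ι ℝ := ∑ i : ι, X i * X i
noncomputable def Da (a : ι → ℝ) (q : MvPolynomial ι ℝ) : MvPolynomial ι ℝ := ∑ i, C (a i) * pderiv i q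
noncomputable def Lap (q : MvPolynomial ι ℝ) : MvPolynomial ι ℝ := ∑ i, pderiv i (pderiv i q)

lemma fB_lin (a : ι → ℝ) (p q : MvPolynomial ι ℝ) : fB (lin a * p) q = fB p (Da a q) := by
  unfold lin Da
  rw [Finset.sum_mul, map_sum, LinearMap.sum_apply, map_sum]
  refine Finset.sum_congr rfl fun i _ => ?_
  rw [mul_assoc, ← smul_eq_C_mul, map_smul, LinearMap.smul_apply, fB_X, ← smul_eq_C_mul, map_smul]

lemma fB_rho (p q : MvPolynomial ι ℝ) : fB (rho * p) q = fB p (Lap q) := by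
  unfold rho Lap
  rw [Finset.sum_mul, map_sum, LinearMap.sum_apply, map_sum]
  refine Finset.sum_congr rfl fun i _ => ?_
  rw [mul_assoc, fB_X, fB_X]

lemma fB_symm (p q : MvPolynomial ι ℝ) : fB p q = fB q p := by
  induction p using MvPolynomial.induction_on' with
  | monomial α r =>
    induction q using MvPolynomial.induction_on' with
    | monomial β s =>
      rw [fB_monomial, fB_monomial, coeff_monomial, coeff_monomial]
      by_cases h : α = β
      · subst h; simp; ring
      · simp [h, Ne.symm h]
    | add p q hp hq => simp only [map_add, LinearMap.add_apply, hp, hq]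
  | add p q hp hq => simp only [map_add, LinearMap.add_apply, hp, hq]

def ip (a b : ι → ℝ) : ℝ := ∑ i, a i * b i

lemma pd_lin (i : ι) (a : ι → ℝ) : pderiv i (lin a) = C (a i) := by
  unfold lin
  rw [map_sum]
  rw [Finset.sum_eq_single i]
  · simp [pderiv_C_mul]
  · intro j _ hj; simp [pderiv_C_mul, pderiv_X_of_ne hj]
  · simp

lemma pd_rho (i : ι) : pderiv i (rho : MvPolynomial ι ℝ) = 2 * X i := by
  unfold rho
  rw [map_sum]
  rw [Finset.sum_eq_single i]
  · simp [Derivation.leibniz]; ring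
  · intro j _ hj; simp [Derivation.leibniz, pderiv_X_of_ne hj]
  · simp

lemma pd_pow (i : ι) (p : MvPolynomial ι ℝ) (n : ℕ) :
    pderiv i (p ^ n) = (n : MvPolynomial ι ℝ) * p ^ (n - 1) * pderiv i p := by
  rw [Derivation.leibniz_pow]; simp [mul_assoc]

lemma Da_lin_pow (a b : ι → ℝ) (n : ℕ) :
    Da b (lin a ^ (n+1)) = C ((n+1) * ip b a) * lin a ^ n := by
  unfold Da ip
  simp only [pd_pow, pd_lin, Nat.add_sub_cancel]
  rw [Finset.mul_sum, map_sum, Finset.sum_mul]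
  refine Finset.sum_congr rfl fun i _ => ?_
  simp only [map_mul, map_add, map_natCast, map_one, Nat.cast_add, Nat.cast_one]; ring

lemma Lap_lin_pow (a : ι → ℝ) (n : ℕ) :
    Lap (lin a ^ (n+2)) = C ((n+2) * (n+1) * ip a a) * lin a ^ n := by
  unfold Lap ip
  rw [Finset.mul_sum, map_sum, Finset.sum_mul]
  refine Finset.sum_congr rfl fun i _ => ?_
  rw [pd_pow, pd_lin, show n + 2 - 1 = n + 1 from rfl, mul_comm, pderiv_C_mul,
    show ((n+2 : ℕ) : MvPolynomial ι ℝ) = C ((n+2 : ℕ) : ℝ) from (map_natCast C _).symm, pderiv_C_mul,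
    pd_pow, pd_lin]
  simp only [smul_eq_C_mul, map_mul, map_add, map_natCast, map_one, Nat.cast_add, Nat.cast_one, Nat.add_sub_cancel, map_ofNat, Nat.cast_ofNat]; ring

lemma fB_powlin (a b : ι → ℝ) (m j : ℕ) :
    fB (rho ^ j * lin b ^ m) (lin a ^ (2 * j + m)) = ((2*j+m).factorial : ℝ) * ip a a ^ j * ip b a ^ m := by
  induction j with
  | zero =>
    induction m with
    | zero =>
      simp
      have := fB_monomial (ι := ι) 0 1 1
      simpa [fw] using this
    | succ m ih =>
      simp only [pow_zero, one_mul, mul_zero, zero_add] at ih ⊢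
      rw [pow_succ', fB_lin, Da_lin_pow, ← smul_eq_C_mul, map_smul, ih, Nat.factorial_succ]
      simp; ring
  | succ j ih =>
    rw [pow_succ', mul_assoc, fB_rho, show 2 * (j+1) + m = (2*j+m) + 2 by ring, Lap_lin_pow,
      ← smul_eq_C_mul, map_smul, ih, Nat.factorial_succ, Nat.factorial_succ]
    push_cast; simp; ring

lemma Lap_lin_pow' (a : ι → ℝ) (m : ℕ) :
    Lap (lin a ^ m) = C ((m:ℝ) * (m - 1) * ip a a) * lin a ^ (m - 2) := by
  match m with
  | 0 => simp [Lap]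
  | 1 => simp [Lap, pd_lin]
  | n + 2 => rw [Lap_lin_pow]; simp only [Nat.add_sub_cancel]; congr 2; push_cast; ring

lemma Eul (a : ι → ℝ) (j m : ℕ) :
    ∑ i, X i * pderiv i (rho ^ j * lin a ^ m) = C (2 * (j:ℝ) + m) * (rho ^ j * lin a ^ m) := by
  have h1 : ∀ i : ι, X i * pderiv i (rho ^ j * lin a ^ m) =
      (X i * X i) * (2 * (j : MvPolynomial ι ℝ) * rho ^ (j-1) * lin a ^ m)
      + (C (a i) * X i) * ((m : MvPolynomial ι ℝ) * rho ^ j * lin a ^ (m-1)) := by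
    intro i
    rw [Derivation.leibniz, pd_pow, pd_pow, pd_lin, pd_rho]
    simp only [smul_eq_mul]; ring
  simp only [h1]
  rw [Finset.sum_add_distrib, ← Finset.sum_mul, ← Finset.sum_mul]
  change rho * _ + lin a * _ = _
  simp only [map_add, map_mul, map_natCast, map_ofNat]
  rcases j with _ | j <;> rcases m with _ | m <;> simp only [Nat.add_sub_cancel, Nat.cast_zero, Nat.cast_add, Nat.cast_one] <;> ring

lemma Lap_rho_mul (q : MvPolynomial ι ℝ) :
    Lap (rho * q) = C (2 * (Fintype.card ι : ℝ)) * q + 4 * ∑ i, X i * pderiv i q + rho * Lap q := by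
  unfold Lap
  have h1 : ∀ i : ι, pderiv i (pderiv i (rho * q)) =
      2 * q + 4 * (X i * pderiv i q) + rho * pderiv i (pderiv i q) := by
    intro i
    have h2 : pderiv i (2 : MvPolynomial ι ℝ) = 0 := by
      rw [show (2 : MvPolynomial ι ℝ) = C 2 from (map_ofNat C 2).symm]; exact pderiv_C
    simp only [Derivation.leibniz, pd_rho, map_add, smul_eq_mul, pderiv_X_self, h2]; ring
  simp only [h1, Finset.sum_add_distrib, ← Finset.mul_sum]
  simp only [Finset.sum_const, Finset.card_univ, nsmul_eq_mul, map_mul, map_natCast, map_ofNat]; ring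

lemma Lap_rl (a : ι → ℝ) (j m : ℕ) :
    Lap (rho ^ j * lin a ^ m) =
      C (2 * (j:ℝ) * (Fintype.card ι + 2 * j - 2 + 2 * m)) * (rho ^ (j-1) * lin a ^ m)
      + C ((m:ℝ) * (m - 1) * ip a a) * (rho ^ j * lin a ^ (m - 2)) := by
  induction j with
  | zero => simp [Lap_lin_pow']
  | succ j ih =>
    rw [pow_succ', mul_assoc, Lap_rho_mul, Eul, ih]
    rcases j with _ | j
    · simp only [zero_add, Nat.sub_self, pow_zero, Nat.cast_zero, map_add, map_mul, map_natCast, map_ofNat, map_sub, map_one, map_zero, Nat.cast_add, Nat.cast_one]; ring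
    · simp only [Nat.add_sub_cancel, map_add, map_mul, map_natCast, map_ofNat, map_sub, map_one, Nat.cast_add, Nat.cast_one]; ring

def Kf (k : ℕ) (c : ℕ → ℝ) (s w : ℝ) : ℝ := ∑ j ∈ Finset.range (k / 2 + 1), c j * w ^ j * s ^ (k - 2 * j)
noncomputable def Hk (k : ℕ) (c : ℕ → ℝ) (b : ι → ℝ) : MvPolynomial ι ℝ :=
  ∑ j ∈ Finset.range (k / 2 + 1), C (c j * ip b b ^ j) * (rho ^ j * lin b ^ (k - 2 * j))

lemma tele {M : Type*} [AddCommGroup M] (A B : ℕ → M) (N : ℕ) (h0 : A 0 = 0)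
    (h : ∀ j < N, A (j+1) + B j = 0) : ∑ j ∈ Finset.range (N+1), (A j + B j) = B N := by
  induction N with
  | zero => simp [h0]
  | succ N ih =>
    rw [Finset.sum_range_succ, ih (fun j hj => h j (by omega))]
    have := h N (by omega)
    rw [← add_assoc, add_comm (B N), this, zero_add]

lemma Lap_add (p q : MvPolynomial ι ℝ) : Lap (p + q) = Lap p + Lap q := by
  simp [Lap, Finset.sum_add_distrib]
lemma Lap_sum {s : Finset ℕ} (f : ℕ → MvPolynomial ι ℝ) : Lap (∑ j ∈ s, f j) = ∑ j ∈ s, Lap (f j) := by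
  simp only [Lap, map_sum]; rw [Finset.sum_comm]
lemma Lap_C (r : ℝ) (q : MvPolynomial ι ℝ) : Lap (C r * q) = C r * Lap q := by
  simp only [Lap, pderiv_C_mul, Finset.mul_sum, smul_eq_C_mul]

lemma Lap_Hk (k : ℕ) (c : ℕ → ℝ) (b : ι → ℝ)
    (hc : ∀ j, 2 * j + 2 ≤ k → c (j+1) * (2 * (j+1) * (Fintype.card ι + 2 * k - 2 * j - 4))
      + c j * ((k - 2 * j) * (k - 2 * j - 1)) = 0) : Lap (Hk k c b) = 0 := by
  unfold Hk
  rw [Lap_sum]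
  have h : ∀ j ∈ Finset.range (k/2+1), Lap (C (c j * ip b b ^ j) * (rho ^ j * lin b ^ (k - 2 * j))) =
     C (c j * ip b b ^ j * (2 * (j:ℝ) * (Fintype.card ι + 2 * j - 2 + 2 * (k - 2 * j : ℕ)))) * (rho ^ (j-1) * lin b ^ (k - 2 * j))
      + C (c j * ip b b ^ (j+1) * (((k - 2 * j : ℕ):ℝ) * ((k - 2 * j : ℕ) - 1))) * (rho ^ j * lin b ^ (k - 2 * j - 2)) := by
    intro j _
    rw [Lap_C, Lap_rl]
    simp only [map_mul, map_pow, pow_succ]; ring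
  rw [Finset.sum_congr rfl h, tele]
  · have : k - 2 * (k/2) = 0 ∨ k - 2 * (k/2) = 1 := by omega
    rcases this with h | h <;> rw [h] <;> simp
  · simp
  · intro j hj
    have h1 : 2 * j + 2 ≤ k := by omega
    have h2 := hc j h1
    rw [show k - 2 * (j+1) = k - 2 * j - 2 by omega, Nat.add_sub_cancel, ← add_mul, ← C_add]
    have e1 : ((k - 2 * j : ℕ) : ℝ) = k - 2 * j := by rw [Nat.cast_sub (by omega)]; push_cast; ring
    have e2 : ((k - 2 * j - 2 : ℕ) : ℝ) = k - 2 * j - 2 := by rw [Nat.cast_sub (by omega), e1]; push_cast; ring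
    rw [e1, e2]
    convert zero_mul _
    rw [C_eq_zero]
    push_cast
    linear_combination (ip b b ^ (j+1)) * h2

lemma fB_Hk_lin (k : ℕ) (c : ℕ → ℝ) (a b : ι → ℝ) :
    fB (Hk k c b) (lin a ^ k) = k.factorial * Kf k c (ip b a) (ip a a * ip b b) := by
  unfold Hk Kf
  rw [map_sum, LinearMap.sum_apply, Finset.mul_sum]
  refine Finset.sum_congr rfl fun j hj => ?_
  have hj : 2 * j ≤ k := by simp at hj; omega
  have h := fB_powlin a b (k - 2 * j) j
  rw [show 2 * j + (k - 2 * j) = k by omega] at h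
  rw [← smul_eq_C_mul, map_smul, LinearMap.smul_apply, h, smul_eq_mul, mul_pow]; ring

lemma fB_Hk (k : ℕ) (c : ℕ → ℝ) (a b : ι → ℝ) (hL : Lap (Hk k c b) = 0) :
    fB (Hk k c a) (Hk k c b) = c 0 * (k.factorial * Kf k c (ip b a) (ip a a * ip b b)) := by
  have h : Hk k c a = c 0 • lin a ^ k + rho * ∑ j ∈ Finset.range (k / 2),
      C (c (j+1) * ip a a ^ (j+1)) * (rho ^ j * lin a ^ (k - 2 * (j+1))) := by
    rw [Hk, Finset.sum_range_succ', Finset.mul_sum, add_comm]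
    congr 1
    · simp [smul_eq_C_mul]
    · refine Finset.sum_congr rfl fun j _ => ?_
      rw [pow_succ rho]; ring
  rw [h, map_add, LinearMap.add_apply, fB_rho, hL, map_zero, add_zero, map_smul, LinearMap.smul_apply,
    fB_symm, fB_Hk_lin, smul_eq_mul]

theorem Kf_pos {α : Type} (k : ℕ) (c : ℕ → ℝ) (c0 : 0 < c 0)
    (hc : ∀ j, 2 * j + 2 ≤ k → c (j+1) * (2 * (j+1) * (Fintype.card ι + 2 * k - 2 * j - 4))
      + c j * ((k - 2 * j) * (k - 2 * j - 1)) = 0) (s : Finset α) (v : α → ι → ℝ) (w : α → ℝ) :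
    0 ≤ ∑ x ∈ s, ∑ y ∈ s, w x * w y * Kf k c (ip (v x) (v y)) (ip (v x) (v x) * ip (v y) (v y)) := by
  have h := fB_self (∑ x ∈ s, w x • Hk k c (v x))
  simp only [map_sum, LinearMap.sum_apply, map_smul, LinearMap.smul_apply] at h
  have e2 : ∀ x y, w x * (w y * fB (Hk k c (v y)) (Hk k c (v x))) =
     (c 0 * k.factorial) * (w x * w y * Kf k c (ip (v x) (v y)) (ip (v x) (v x) * ip (v y) (v y))) := by
    intro x y
    rw [fB_Hk k c _ _ (Lap_Hk k c _ hc), mul_comm (ip (v y) (v y))]; ring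
  simp only [smul_eq_mul, Finset.mul_sum, e2] at h
  simp only [← Finset.mul_sum] at h
  have hk : 0 < c 0 * k.factorial := by positivity
  exact nonneg_of_mul_nonneg_right h hk

end geg
end Kiss

namespace Kiss
section sums
def qL : List (List ℤ) := [[1],[1],[11,-1],[13,-3],[65,-26,1],[17,-10,1],[323,-255,45,-1]]
def pL : List (List ℤ) := [[1],[1],[12,-1],[14,-3],[224,-84,3],[288,-160,15],[384,-288,48,-1],[528,-504,126,-7]]
def aL : List ℤ := [0, 1218998, 418, 2354468, 143380, 409220, 20722, 10486]
def lc (L : List (List ℤ)) (k j : ℕ) : ℝ := (((L.getD k []).getD j 0 : ℤ) : ℝ)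

lemma q_rec (k : ℕ) (hk : k < 7) (j : ℕ) (hj : 2 * j + 2 ≤ k) :
    lc qL k (j+1) * (2 * (j+1) * ((11:ℕ) + 2 * k - 2 * j - 4)) + lc qL k j * ((k - 2 * j) * (k - 2 * j - 1)) = 0 := by
  have : j < 3 := by omega
  interval_cases k <;> interval_cases j <;> first | omega | (simp [lc, qL]; norm_num)

lemma p_rec (k : ℕ) (hk : k < 8) (j : ℕ) (hj : 2 * j + 2 ≤ k) :
    lc pL k (j+1) * (2 * (j+1) * ((12:ℕ) + 2 * k - 2 * j - 4)) + lc pL k j * ((k - 2 * j) * (k - 2 * j - 1)) = 0 := by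
  have : j < 3 := by omega
  interval_cases k <;> interval_cases j <;> first | omega | (simp [lc, pL]; norm_num)

lemma q_pos (k : ℕ) (hk : k < 7) : 0 < lc qL k 0 := by
  interval_cases k <;> simp [lc, qL]
lemma p_pos (k : ℕ) (hk : k < 8) : 0 < lc pL k 0 := by
  interval_cases k <;> simp [lc, pL]

def dotL (u v : ℝ) : List (ℝ → ℝ) → ℝ
  | [] => 0
  | g :: l => g u * g v + dotL u v l
def TT (G : ℕ → List (ℝ → ℝ)) (u v t : ℝ) : ℝ :=
  ∑ k ∈ Finset.range 7, Kf k (lc qL k) (t - u * v) ((1 - u ^ 2) * (1 - v ^ 2)) * dotL u v (G k)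
/-- scaled by 2^20 -/
def AA (t : ℝ) : ℝ := ∑ k ∈ Finset.range 8, ((aL.getD k 0 : ℤ) : ℝ) * Kf k (lc pL k) t 1

lemma dotL_symm (u v : ℝ) (l : List (ℝ → ℝ)) : dotL u v l = dotL v u l := by
  induction l with
  | nil => rfl
  | cons g l ih => simp [dotL, ih, mul_comm]
lemma TT_symm (G : ℕ → List (ℝ → ℝ)) (u v t : ℝ) : TT G u v t = TT G v u t := by
  unfold TT
  refine Finset.sum_congr rfl fun k _ => ?_
  rw [dotL_symm, mul_comm u v, mul_comm (1 - u^2)]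

lemma sw {α : Type} (S : Finset α) (K : Finset ℕ) (f : ℕ → α → α → ℝ) :
    ∑ x ∈ S, ∑ y ∈ S, ∑ k ∈ K, f k x y = ∑ k ∈ K, ∑ x ∈ S, ∑ y ∈ S, f k x y := by
  rw [Finset.sum_comm (s := K)]
  refine Finset.sum_congr rfl fun x _ => ?_
  rw [Finset.sum_comm]

abbrev E12 := EuclideanSpace ℝ (Fin 12)

lemma AA_pos (S : Finset E12) (hn : ∀ x ∈ S, ‖x‖ = 1) :
    0 ≤ ∑ x ∈ S, ∑ y ∈ S, AA (inner ℝ x y) := by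
  have key : ∀ k < 8, 0 ≤ ∑ x ∈ S, ∑ y ∈ S, Kf k (lc pL k) (inner ℝ x y) 1 := by
    intro k hk
    have h := Kf_pos (ι := Fin 12) k (lc pL k) (p_pos k hk)
      (by rw [Fintype.card_fin]; exact p_rec k hk) S (fun x i => x i) (fun _ => 1)
    convert h using 4 with x hx y hy
    have e : ∀ x y : E12, inner ℝ x y = ip (fun i => x i) (fun i => y i) := by
      intro x y; simp [ip, PiLp.inner_apply, mul_comm]
    rw [← e, ← e, ← e, real_inner_self_eq_norm_sq, real_inner_self_eq_norm_sq, hn x hx, hn y hy]; norm_num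
  have e : ∑ x ∈ S, ∑ y ∈ S, AA (inner ℝ x y) =
      ∑ k ∈ Finset.range 8, ((aL.getD k 0 : ℤ) : ℝ) * ∑ x ∈ S, ∑ y ∈ S, Kf k (lc pL k) (inner ℝ x y) 1 := by
    unfold AA
    simp only [Finset.mul_sum]
    rw [sw]
  rw [e]
  refine Finset.sum_nonneg fun k hk => mul_nonneg ?_ (key k (Finset.mem_range.1 hk))
  have := Finset.mem_range.1 hk
  interval_cases k <;> simp [aL]

lemma proj_ex (x : E12) (hx : ‖x‖ = 1) : ∃ v : E12 → Fin 11 → ℝ,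
    ∀ y z, ip (v y) (v z) = inner ℝ y z - inner ℝ x y * inner ℝ x z := by
  have hfr : Module.finrank ℝ (ℝ ∙ x)ᗮ = 11 := by
    haveI : Fact (Module.finrank ℝ E12 = 11 + 1) := ⟨by simp⟩
    exact Submodule.finrank_orthogonal_span_singleton (by rintro rfl; simp at hx)
  obtain ⟨B⟩ : Nonempty (OrthonormalBasis (Fin 11) ℝ (ℝ ∙ x)ᗮ) :=
    ⟨(stdOrthonormalBasis ℝ (ℝ ∙ x)ᗮ).reindex (finCongr hfr)⟩
  have hmem : ∀ y : E12, y - (inner ℝ x y : ℝ) • x ∈ (ℝ ∙ x)ᗮ := by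
    intro y
    rw [Submodule.mem_orthogonal_singleton_iff_inner_right]
    rw [inner_sub_right, inner_smul_right, real_inner_self_eq_norm_sq, hx]; ring
  refine ⟨fun y i => inner ℝ (B i) (⟨_, hmem y⟩ : (ℝ ∙ x)ᗮ), fun y z => ?_⟩
  have h1 := B.sum_inner_mul_inner ⟨_, hmem y⟩ ⟨_, hmem z⟩
  unfold ip
  have h2 : ∀ i, (inner ℝ (B i) (⟨_, hmem y⟩ : (ℝ ∙ x)ᗮ) : ℝ) = inner ℝ (⟨_, hmem y⟩ : (ℝ ∙ x)ᗮ) (B i) :=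
    fun i => real_inner_comm _ _
  simp only [h2]
  rw [h1, Submodule.coe_inner]
  have h3 : (inner ℝ y x : ℝ) = inner ℝ x y := real_inner_comm _ _
  change (inner ℝ (y - (inner ℝ x y : ℝ) • x) (z - (inner ℝ x z : ℝ) • x) : ℝ) = _
  rw [inner_sub_left, inner_sub_right, inner_sub_right, real_inner_smul_left, real_inner_smul_left,
    real_inner_smul_right, real_inner_smul_right, real_inner_self_eq_norm_sq, hx, h3]
  ring

lemma TT_pos (G : ℕ → List (ℝ → ℝ)) (S : Finset E12) (x : E12) (hx : ‖x‖ = 1) (hn : ∀ y ∈ S, ‖y‖ = 1) :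
    0 ≤ ∑ y ∈ S, ∑ z ∈ S, TT G (inner ℝ x y) (inner ℝ x z) (inner ℝ y z) := by
  obtain ⟨v, hv⟩ := proj_ex x hx
  have key : ∀ k < 7, ∀ l : List (ℝ → ℝ), 0 ≤ ∑ y ∈ S, ∑ z ∈ S,
      Kf k (lc qL k) (inner ℝ y z - inner ℝ x y * inner ℝ x z)
        ((1 - (inner ℝ x y) ^ 2) * (1 - (inner ℝ x z) ^ 2)) * dotL (inner ℝ x y) (inner ℝ x z) l := by
    intro k hk l
    induction l with
    | nil => simp [dotL]
    | cons g l ih =>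
      simp only [dotL, mul_add, Finset.sum_add_distrib]
      refine add_nonneg ?_ ih
      have h := Kf_pos k (lc qL k) (q_pos k hk)
        (by rw [Fintype.card_fin]; exact q_rec k hk) S v (fun y => g (inner ℝ x y))
      refine h.trans (le_of_eq (Finset.sum_congr rfl fun y hy => Finset.sum_congr rfl fun z hz => ?_))
      rw [hv, hv, hv, real_inner_self_eq_norm_sq, real_inner_self_eq_norm_sq, hn y hy, hn z hz]
      simp only [one_pow]
      ring_nf
  have e : ∑ y ∈ S, ∑ z ∈ S, TT G (inner ℝ x y) (inner ℝ x z) (inner ℝ y z) =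
      ∑ k ∈ Finset.range 7, ∑ y ∈ S, ∑ z ∈ S,
      Kf k (lc qL k) (inner ℝ y z - inner ℝ x y * inner ℝ x z)
        ((1 - (inner ℝ x y) ^ 2) * (1 - (inner ℝ x z) ^ 2)) * dotL (inner ℝ x y) (inner ℝ x z) (G k) := by
    unfold TT
    rw [sw]
  rw [e]
  exact Finset.sum_nonneg fun k hk => key k (Finset.mem_range.1 hk) _

theorem main_sum (G : ℕ → List (ℝ → ℝ)) (c2 c3 : ℝ)
    (h2 : ∀ u : ℝ, -1 ≤ u → u ≤ 1/2 → AA u + TT G u u 1 ≤ c2)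
    (h3 : ∀ u v t : ℝ, -1 ≤ u → u ≤ v → v ≤ t → t ≤ 1/2 → 0 ≤ 1 + 2*u*v*t - u^2 - v^2 - t^2 →
      TT G u v t + TT G v t u + TT G t u v ≤ 3 * c3)
    (hc : AA 1 + 1357 * c2 + 1357 * 1356 * c3 < 0)
    (S : Finset E12) (hnorm : ∀ x ∈ S, ‖x‖ = 1)
    (hdist : ∀ x ∈ S, ∀ y ∈ S, x ≠ y → 1 ≤ dist x y) : S.card ≤ 1357 := by
  classical
  by_contra hcon
  obtain ⟨S', hS', hcard⟩ := Finset.exists_subset_card_eq (show 1358 ≤ S.card by omega)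
  replace hnorm := fun x hx => hnorm x (hS' hx)
  replace hdist := fun x hx y hy => hdist x (hS' hx) y (hS' hy)
  clear hcon hS'
  generalize S' = S at *
  have hlo : ∀ x ∈ S, ∀ y ∈ S, -1 ≤ (inner ℝ x y : ℝ) := by
    intro x hx y hy
    have := abs_real_inner_le_norm x y
    rw [hnorm x hx, hnorm y hy] at this
    linarith [(abs_le.1 this).1]
  have hhi : ∀ x ∈ S, ∀ y ∈ S, x ≠ y → (inner ℝ x y : ℝ) ≤ 1/2 := by
    intro x hx y hy hxy
    have h := hdist x hx y hy hxy
    rw [dist_eq_norm] at h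
    have h1 := norm_sub_sq_real x y
    rw [hnorm x hx, hnorm y hy] at h1
    nlinarith
  -- determinant
  have hdet : ∀ x ∈ S, ∀ y ∈ S, ∀ z ∈ S, 0 ≤ 1 + 2*(inner ℝ x y : ℝ) * inner ℝ x z * inner ℝ y z
      - (inner ℝ x y)^2 - (inner ℝ x z)^2 - (inner ℝ y z)^2 := by
    intro x hx y hy z hz
    obtain ⟨v, hv⟩ := proj_ex x (hnorm x hx)
    have h : (ip (v y) (v z))^2 ≤ ip (v y) (v y) * ip (v z) (v z) := by
      unfold ip
      have := Finset.sum_mul_sq_le_sq_mul_sq Finset.univ (v y) (v z)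
      simpa [sq] using this
    rw [hv, hv, hv, real_inner_self_eq_norm_sq, real_inner_self_eq_norm_sq, hnorm y hy, hnorm z hz] at h
    nlinarith
  have hT : ∀ u v t : ℝ, -1 ≤ u → -1 ≤ v → -1 ≤ t → u ≤ 1/2 → v ≤ 1/2 → t ≤ 1/2 →
      0 ≤ 1 + 2*u*v*t - u^2 - v^2 - t^2 → TT G u v t + TT G v t u + TT G t u v ≤ 3 * c3 := by
    intro u v t hu hv ht hu' hv' ht' hd
    have s1 := TT_symm G u v t
    have s2 := TT_symm G v t u
    have s3 := TT_symm G t u v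
    rcases le_total u v with a | a <;> rcases le_total v t with b | b <;> rcases le_total u t with c | c
    · exact h3 u v t hu a b ht' hd
    · exact h3 u v t hu a b ht' hd
    · have := h3 u t v hu c b hv' (by linarith); linarith
    · have := h3 t u v ht c a hv' (by linarith); linarith
    · have := h3 v u t hv a c ht' (by linarith); linarith
    · have := h3 v t u hv b c hu' (by linarith); linarith
    · have := h3 t v u ht b a hu' (by linarith); linarith
    · have := h3 t v u ht b a hu' (by linarith); linarith
  let g : E12 → E12 → E12 → ℝ := fun x y z => if x ≠ y ∧ x ≠ z ∧ y ≠ z then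
    TT G (inner ℝ x y) (inner ℝ x z) (inner ℝ y z) else 0
  let D : ℝ := ∑ x ∈ S, ∑ y ∈ S, if x ≠ y then TT G (inner ℝ x y) (inner ℝ x y) 1 else 0
  let I3 : ℝ := ∑ x ∈ S, ∑ y ∈ S, ∑ z ∈ S, g x y z
  have e1 : 0 ≤ D + I3 := by
    simp only [D, I3, ← Finset.sum_add_distrib]
    refine Finset.sum_nonneg fun x hx => ?_
    have h := TT_pos G (S.erase x) x (hnorm x hx) (fun y hy => hnorm y (Finset.mem_of_mem_erase hy))
    refine h.trans (le_of_eq ?_)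
    rw [← Finset.add_sum_erase S _ hx]
    have e0 : (if x ≠ x then TT G (inner ℝ x x) (inner ℝ x x) 1 else 0) + ∑ z ∈ S, g x x z = 0 := by
      simp [g]
    rw [e0, zero_add]
    refine Finset.sum_congr rfl fun y hy => ?_
    have hyx : x ≠ y := (Finset.ne_of_mem_erase hy).symm
    rw [← Finset.add_sum_erase (S.erase x) _ hy, if_pos hyx, real_inner_self_eq_norm_sq,
      hnorm y (Finset.mem_of_mem_erase hy), one_pow]
    congr 1
    rw [← Finset.add_sum_erase S _ hx, ← Finset.add_sum_erase (S.erase x) _ hy]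
    have g1 : g x y x = 0 := by simp [g]
    have g2 : g x y y = 0 := by simp [g]
    rw [g1, g2, zero_add, zero_add]
    refine Finset.sum_congr rfl fun z hz => ?_
    simp only [Finset.mem_erase] at hz
    simp only [g]
    rw [if_pos ⟨hyx, fun h => hz.2.1 h.symm, fun h => hz.1 h.symm⟩]
  have c1 : ∑ x ∈ S, ∑ y ∈ S, ∑ z ∈ S, g y z x = I3 := by
    simp only [I3]
    rw [Finset.sum_comm]
    refine Finset.sum_congr rfl fun x _ => ?_
    rw [Finset.sum_comm]
  have c2' : ∑ x ∈ S, ∑ y ∈ S, ∑ z ∈ S, g z x y = I3 := by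
    rw [← c1]
    rw [Finset.sum_comm]
    refine Finset.sum_congr rfl fun x _ => ?_
    rw [Finset.sum_comm]
  have cnt2 : ∀ x ∈ S, ∀ c : ℝ, (∑ y ∈ S, if x ≠ y then c else 0) = 1357 * c := by
    intro x hx c
    rw [← Finset.sum_filter, Finset.filter_ne, Finset.sum_const, Finset.card_erase_of_mem hx, hcard]
    simp
  have cnt3 : ∀ x ∈ S, ∀ y ∈ S, ∀ c : ℝ, (∑ z ∈ S, if x ≠ y ∧ x ≠ z ∧ y ≠ z then c else 0) =
      if x ≠ y then 1356 * c else 0 := by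
    intro x hx y hy c
    by_cases hxy : x = y
    · simp [hxy]
    · simp only [ne_eq, hxy, not_false_eq_true, true_and, if_true]
      have : (S.filter fun z => ¬ x = z ∧ ¬ y = z) = (S.erase x).erase y := by
        ext z; simp only [Finset.mem_filter, Finset.mem_erase]; tauto
      rw [← Finset.sum_filter, this, Finset.sum_const, Finset.card_erase_of_mem
        (Finset.mem_erase.2 ⟨fun h => hxy h.symm, hy⟩), Finset.card_erase_of_mem hx, hcard]
      simp
  have e3 : 3 * I3 ≤ 3 * (1358 * (1357 * (1356 * c3))) := by
    have : 3 * I3 = ∑ x ∈ S, ∑ y ∈ S, ∑ z ∈ S, (g x y z + g y z x + g z x y) := by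
      simp only [Finset.sum_add_distrib]
      rw [c1, c2']; ring
    rw [this]
    have : 3 * (1358 * (1357 * (1356 * c3))) = ∑ x ∈ S, ∑ y ∈ S, ∑ z ∈ S, if x ≠ y ∧ x ≠ z ∧ y ≠ z then 3 * c3 else 0 := by
      rw [Finset.sum_congr rfl fun x hx => Finset.sum_congr rfl fun y hy => cnt3 x hx y hy _]
      rw [Finset.sum_congr rfl fun x hx => cnt2 x hx _]
      rw [Finset.sum_const, hcard]; simp; ring
    rw [this]
    refine Finset.sum_le_sum fun x hx => Finset.sum_le_sum fun y hy => Finset.sum_le_sum fun z hz => ?_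
    by_cases h : x ≠ y ∧ x ≠ z ∧ y ≠ z
    · obtain ⟨h1, h2, h3⟩ := h
      simp only [g]
      rw [if_pos (⟨h1, h2, h3⟩ : x ≠ y ∧ x ≠ z ∧ y ≠ z), if_pos (⟨h1, h2, h3⟩ : x ≠ y ∧ x ≠ z ∧ y ≠ z),
        if_pos (⟨h3, h1.symm, h2.symm⟩ : y ≠ z ∧ y ≠ x ∧ z ≠ x),
        if_pos (⟨h2.symm, h3.symm, h1⟩ : z ≠ x ∧ z ≠ y ∧ x ≠ y)]
      have k := hT (inner ℝ x y) (inner ℝ x z) (inner ℝ y z) (hlo x hx y hy) (hlo x hx z hz) (hlo y hy z hz)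
        (hhi x hx y hy h1) (hhi x hx z hz h2) (hhi y hy z hz h3) (hdet x hx y hy z hz)
      have i1 : (inner ℝ y x : ℝ) = inner ℝ x y := real_inner_comm _ _
      have i2 : (inner ℝ z x : ℝ) = inner ℝ x z := real_inner_comm _ _
      have i3 : (inner ℝ z y : ℝ) = inner ℝ y z := real_inner_comm _ _
      rw [i1, i2, i3]
      linarith
    · have h' : ¬ (y ≠ z ∧ y ≠ x ∧ z ≠ x) := by
        intro ⟨a, b, c⟩; exact h ⟨b.symm, c.symm, a⟩
      have h'' : ¬ (z ≠ x ∧ z ≠ y ∧ x ≠ y) := by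
        intro ⟨a, b, c⟩; exact h ⟨c, a.symm, b.symm⟩
      simp only [g]
      rw [if_neg h, if_neg h, if_neg h', if_neg h'']; norm_num
  have e2 : (∑ x ∈ S, ∑ y ∈ S, AA (inner ℝ x y)) + D ≤ 1358 * (AA 1 + 1357 * c2) := by
    simp only [D, ← Finset.sum_add_distrib]
    have : (1358 : ℝ) * (AA 1 + 1357 * c2) = ∑ x ∈ S, (AA 1 + 1357 * c2) := by
      rw [Finset.sum_const, hcard]; simp only [nsmul_eq_mul]; norm_num
    rw [this]
    refine Finset.sum_le_sum fun x hx => ?_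
    rw [← Finset.add_sum_erase S _ hx, real_inner_self_eq_norm_sq, hnorm x hx]
    have : ∑ y ∈ S.erase x, c2 = 1357 * c2 := by
      rw [Finset.sum_const, Finset.card_erase_of_mem hx, hcard]; simp
    rw [← this]
    simp only [ne_eq, not_true_eq_false, if_false, one_pow, add_zero]
    refine add_le_add le_rfl (Finset.sum_le_sum fun y hy => ?_)
    have hyx : x ≠ y := (Finset.ne_of_mem_erase hy).symm
    rw [if_pos hyx]
    have hy := Finset.mem_of_mem_erase hy
    exact h2 _ (hlo x hx y hy) (hhi x hx y hy hyx)
  have e0 := AA_pos S hnorm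
  linarith
end sums
end Kiss

namespace Kiss
set_option maxRecDepth 1000000
def cF : List (List (List ℤ)) := [
[[27766294,298363098,498671741,-23070399390,131355509711,-409968074152,824998420966,-1164164511761,1175456887205,-818631378700,376718535977,-105688401707,15681873631,-1143318893,144209442,-10567350,-258811],
[-1272174,-125197302,3937602307,-32178443735,151316516961,-424708393556,754724329347,-987674588288,1030452952974,-855086611158,511458029509,-196823026200,43558664966,-5268982487,270871638,954999,487571],
[7489338,-674191125,10085556950,-59920127466,125417604831,125229259018,-1041001299661,2104676338589,-2238766079226,1412735713940,-565564043929,145122495050,-24684444153,2844242700,-169865878,3829659,141632],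
[-8569831,1137055493,-22590797282,171879132609,-668366265638,1372632920246,-1158820695784,-782975232861,2942282947464,-3163305492768,1818144040942,-613927114434,120998328874,-12983736215,579626117,-8644992,149988],
[1196696,-29072842,-3242103141,67601637198,-525676194987,2129368787968,-5056789966033,7541733956605,-7306573147504,4690052576777,-2010075099056,569224280266,-103327583791,10869890119,-556071627,6915004,79159],
[-2223970,405059428,-11215940891,116023274823,-599470092475,1762753086360,-3143693519981,3463060864453,-2321579181910,901169740389,-175161555914,14151731057,-3909236394,1550637344,-205995317,7666538,-26958],
[1472144,-230694061,5175614952,-44077161278,199273282868,-482275937371,468678770950,341580235308,-1439077654687,1694425113362,-1048994705724,377798940748,-78616448718,8690020739,-437236730,6208891,9805],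
[-386250,68718809,-1604621320,11200168816,-23012840054,-58398844068,421408249510,-1018339400047,1349939670587,-1079487459684,526813108618,-151904121062,23305913190,-1240000242,-56489013,4321336,-20685],
[-23790,26398572,-1779318484,33601154166,-269257662843,1125491548485,-2770009966475,4295392894181,-4342542041416,2911196929202,-1297820118083,378778836258,-69526103875,7284900565,-345712511,4178235,4488],
[-524068,141338156,-5523052617,75870919233,-498147623327,1836991683977,-4170152252696,6129051475642,-5992202594284,3937798775990,-1725819414030,489761705541,-84129307825,7496160626,-233208241,-1165797,29057],
[231407,-69205649,2961588357,-43354457876,289770904333,-1020568173557,2040833927816,-2366874271556,1513740175993,-399528384960,-83297575472,86218495346,-22166249075,2246599308,-63804568,-743279,10103],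
[-49234,16363534,-787978753,13195391534,-103225646135,440051322687,-1121697781651,1806269395042,-1888771077391,1293038733816,-575033951582,161221919648,-26666461954,2302244162,-83063699,747452,376],
[11956,-4397126,232798037,-4220591791,34747761830,-149056467990,358608026598,-498666264772,391615159932,-147621894910,-560699567,21233823135,-7251251866,991832249,-55539545,1005914,-2523],
[-3786,1472913,-82234054,1563006340,-13365795371,58817678408,-143381745851,201656715160,-166566203982,80272774315,-21317237396,2367553082,164986304,-68479959,5601680,-133488,428],
[2116,-926976,59331476,-1322016452,13628809891,-74865828312,237798272821,-459066600356,554357981611,-423673808677,203895703950,-60336155939,10470185462,-981856898,43133402,-666317,1515],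
[-884,413469,-28172273,664474659,-7184914741,40830686787,-131578637739,251071160742,-289957558878,203764225734,-86263573678,21409945047,-2963014362,209808464,-6521502,65066,-81],
[254,-125765,9117978,-229773053,2667008648,-16357653039,57251785635,-119536695282,152409286485,-119536695282,57251785635,-16357653039,2667008648,-229773053,9117978,-125765,254]],
[[105376622,-3936416752,64614736935,-429003335856,1511314816531,-3017553473376,3331816857480,-1640078534656,-328199948854,853914737793,-459955582188,122303315348,-17176123386,1065339306,1973767,264659],
[-62739009,3590223829,-33627604548,175848396808,-533545963910,898354628745,-692762194808,-154278088492,826513890234,-742596324747,331894945094,-81563360597,10622239298,-747092408,31332331,474037],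
[30347697,-1982949002,25671143798,-185513678172,710142920689,-1594575597934,2235172276303,-2088086110748,1398147759558,-691865205358,243388520876,-54422712700,6194923654,-366129852,36349878,582893],
[-13893492,1118829484,-14250785405,93501892957,-355126207264,724648938214,-825380732245,457974582360,-17071518779,-115311444563,59592441506,-13811606372,1026369084,-196844074,10177777,462990],
[1957012,47563667,-4800097937,47436100231,-231310224596,734015911404,-1498816721442,2035022782242,-1745778864321,916789760921,-281499915368,44617628169,-2900546545,-190603273,3877382,454931],
[-5601459,792174796,-17565806755,156844382633,-734830233008,1976347577986,-3244166321148,3359077817365,-2261217194671,1033399717886,-321698202128,69284632958,-8690261422,287592086,-513912,156023],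
[314215,45019716,-3164594714,38299066953,-183318034435,502135703172,-900637078491,1052094252512,-801736057890,360491145306,-66597040815,-9114276729,6435200854,-859887672,21958539,40412],
[-3184100,464084234,-7088341831,1721250022,310271185293,-1554778412448,3485338720511,-4339220043101,3181028911139,-1416840614728,392795655838,-70334354081,8949922105,-681951603,14492069,13511],
[807480,-134778106,2640079723,-10383188207,-31335789395,263459247498,-604957201482,616965369173,-193115263856,-148047528691,159367325607,-62342670598,11259150371,-765061583,10298903,33272],
[-1137528,287837135,-10370095869,128405503161,-742129302029,2367419305332,-4615833800835,5813503990505,-4844544245636,2682540925081,-969323505494,218002664369,-28197976192,1837072037,-45459030,176018],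
[347082,-95367105,3763670739,-51508818329,330985626682,-1170514864168,2487058774839,-3302656576626,2765791014387,-1445690252112,453774521817,-77186182143,5399556731,13808278,-9115043,60205],
[-352786,108246932,-4708723978,69014234257,-452186798932,1525160794587,-2877644628450,3196402233034,-2146761062895,878567731012,-221688353133,36921169821,-4453822621,333850595,-9678077,40268],
[51918,-16943233,780675279,-11999693141,80764308831,-268522806806,458902036024,-375942298811,66496579053,120809053234,-99014274995,32529161209,-5048339316,341116657,-7704647,24615],
[-28927,10857033,-588678997,10980672942,-93620517545,420278224379,-1078683988293,1664303054345,-1586288324097,939481234322,-339687156290,71641135339,-8113797002,426957790,-7823302,20880],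
[7141,-3010283,183598805,-3846911493,36627653263,-181390185278,503092412977,-813759854553,781661036738,-445818051778,148231344584,-27584333074,2667347990,-117059325,1762068,-3830],
[-5102,2219207,-139810029,3029217291,-29859427580,153278394909,-441255985344,741891931402,-741891931402,441255985344,-153278394909,29859427580,-3029217291,139810029,-2219207,5102]],
[[133437555,-3947266101,44603249991,-250322125958,794743103341,-1519927154191,1799417500110,-1324238230706,599668973852,-161619834432,22845315600,-957310737,-114597114,-6548780,12745],
[-14264982,133727084,4887514483,-28361184350,81497681963,-129091969090,119431119005,-69038224628,34063781971,-17274842432,5730164125,-914138886,47291411,4863377,475632],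
[25314895,-1686543705,18945177927,-103548456783,294725093179,-456203252788,396675771541,-174203144454,25181999095,425896473,2917946918,-1850435194,229441521,8133097,395244],
[-6411814,422814720,-3372502492,10062707230,-7728601171,-51946499751,170243587131,-259372670981,227236462548,-117966624053,35291190598,-5836566548,337431229,1547039,98338],
[3417161,-375190102,6595356258,-48800896607,190529294456,-415777613301,521128547622,-355430247964,107167548215,9212778194,-14698334883,2962330114,-228693068,4064856,102455],
[-3938119,463368240,-7606654916,45732415248,-138078278947,214597162038,-148737360185,-12744962668,102575474778,-71887592458,22314126411,-2796732999,34057347,-1135787,149759],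
[2181377,-248272218,2392139626,13243938242,-186596431972,708935632188,-1354436346352,1470565978582,-940308298318,354753622363,-74687026668,7766751122,-312747103,-135587,66397],
[-872465,129760451,-2449018441,14027607395,-38268839200,95092183683,-242963774265,419932066659,-421056714827,238689351261,-75855179395,12778014998,-940244476,18836517,-10603],
[288341,-54538377,1396137335,-11680264782,44783525279,-100777959235,155496857723,-160344612588,96172790697,-26967555553,1255651262,596232626,-50128280,-692915,19736],
[-164002,34986394,-1053142154,11159791495,-59768419902,196505205141,-414964953101,543835856002,-427744350018,196487403769,-49929253085,6226811423,-295841605,2371090,13723],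
[182728,-48782555,1828803810,-22844909513,125861454568,-350830604923,534420639582,-464153407061,233743038145,-68399551393,11892110472,-1341210332,98547642,-3156012,15297],
[-26041,6538230,-219372495,2228958101,-7856139953,2252642267,46471722383,-118190347107,135687193471,-84588541281,28839988333,-5024156330,388873277,-10064328,36610],
[10329,-2999436,119529865,-1521226984,7879333235,-17447342710,12811541002,7624294023,-15333779264,6834894383,-747250996,-127031553,24815502,-901149,3853],
[3210,-1337401,79154568,-1579944843,14053426423,-63638633304,157498610937,-220841273690,177443987493,-80846409156,20166715212,-2567951112,146274560,-2824367,7800],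
[2050,-774866,41971884,-772282658,6371331931,-26901179263,62361824655,-82235373171,62361824655,-26901179263,6371331931,-772282658,41971884,-774866,2050]],
[[336075970,-7763923249,69043785924,-308821788813,768453489449,-1114692447833,963795884024,-491432474787,143073692058,-22328714103,2206505728,-266226778,4991506,-2900],
[-4537879,315440375,-4681854581,26941920062,-82376269488,131194174912,-108058546817,35337137252,10655157454,-10985333470,3148889066,-368913771,29279399,1001546],
[29059250,-1700416428,18151420195,-98684353928,273039703768,-424427744686,385785809919,-200014247018,52160309504,-3765710129,-1091857368,131854266,10718871,1035519],
[-16543994,1336577847,-15614896852,76065095715,-212004307071,351824907106,-352846948748,208823651604,-75248552282,16750759588,-1783172120,-59859056,1333542,471727],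
[6924935,-711149894,10144739334,-54083786608,156705727516,-275670146300,309589615020,-230142926422,111250857079,-33757243139,5870393523,-515773665,16288700,-23975],
[-4490503,457902127,-5900621703,23972058633,-39685135745,4140943339,77908191400,-110645089946,75018518495,-26753691521,5076752917,-517598095,12702451,110909],
[2198485,-225159321,2288146261,-393035059,-38601304704,126881207943,-199395962082,165236391622,-68273173438,12052079356,15482995,-114758965,-6228244,206474],
[-415720,49719963,-673909897,1571547239,9283984610,-64633777073,170329531948,-225691746630,161048696747,-63089320597,12366745094,-932241227,13058082,70879],
[858257,-182484670,5485103570,-55735705609,255058326767,-603885779728,793910642132,-595818586640,252736274254,-56744761321,5500614734,-63892195,-10416799,99617],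
[-167664,36137433,-1068679535,10227162668,-41430010384,79245293603,-71404407641,22645658272,6350669298,-5571958139,1030811864,-44961339,-777731,13904],
[232920,-56998572,1929006740,-21287844399,100408748952,-228644206923,264411237100,-153195426080,37659936200,542543108,-1808923378,251865033,-9335799,44900],
[-41168,10930629,-404779021,4949186607,-26396610361,70508995976,-102666122805,86582890778,-43971663132,13388113869,-2265328384,180709225,-4977084,19519],
[-878,747607,-55661214,1184760593,-10262296939,42449499797,-90922163640,104663418557,-65122570411,21376547240,-3477805918,247102846,-5834220,19374],
[-2068,672256,-30923756,476225835,-3231532452,10987210336,-19976746065,19976746065,-10987210336,3231532452,-476225835,30923756,-672256,2068]],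
[[253590984,-4725252514,34824084440,-130070803242,267461954042,-316497726530,217967314123,-84438955269,16613565250,-1082710046,-1677154,-6387268,-312775],
[-8431207,355999030,-2236551453,6878537761,-17131058081,31282065080,-30092925303,15148314612,-4642457279,943940017,-135082982,8505041,715245],
[15566449,-1034211045,11242820649,-53666013356,136065903866,-195483688073,162544848908,-79105217146,22115581647,-3377917352,159668761,10607966,236768],
[-6081496,518147567,-6739170709,36168803926,-103328548947,163927492940,-146092654750,70146395175,-16310315667,1130546466,97101457,-7057291,65135],
[1612155,-92556294,156243525,5184144704,-29096122659,68890964664,-84329202079,57383517351,-21570288713,4079404509,-336362254,3420348,163480],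
[-1376398,190920671,-3826023393,27130371516,-92029329750,171882399832,-187937301051,121207178108,-44690179669,8752527532,-758190592,17749090,4465],
[290391,-37300407,660038945,-4021578288,11558400942,-17072827424,11922111649,-2222932920,-1638073468,911091542,-133618138,4451814,-6160],
[-490809,75289921,-1552267326,10440328028,-32067250675,55744621270,-61057941164,41844333560,-16983916536,3742219823,-376034796,12185659,-49195],
[52804,-7924369,150911634,-850729639,1989342039,-3109357191,4828257509,-5336859885,3236822099,-999578497,138049903,-6315823,39481],
[-34760,7453528,-220241514,2120831131,-8774297887,17807665188,-19035215981,11066024499,-3473274302,553651357,-38770426,872634,-2486],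
[14331,-3446068,115636854,-1281494832,6179103655,-14756457284,18627083714,-12737496965,4664883416,-865826531,71882296,-2025465,8154],
[-659,90250,54613,-45395607,492329160,-1964276681,3606461812,-3267074519,1469427540,-313618691,28288621,-826438,3326],
[2490,-687344,26462737,-335194672,1831599456,-4884265215,6734365675,-4884265215,1831599456,-335194672,26462737,-687344,2490]],
[[511985460,-7290126948,41161542957,-116167265993,178817473750,-155352750743,75304723211,-17061927032,719930244,301659780,-5971366,-430376],
[-30692804,1122401536,-4903282428,6669477182,1513284216,-13507632640,20153903151,-12458961069,3476672898,-357504183,26763577,-364483],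
[45362603,-2692718948,25282741894,-103261594394,222682077422,-269084954547,183496207603,-69613417248,14210524163,-1397832792,56416779,702104],
[-11995129,982601232,-11675520688,51778149653,-114522494315,140716982901,-100188421493,39743771473,-7988599025,658528350,-18588506,302759],
[1609722,-144418759,2255278140,-15127593015,49154777958,-80869384015,71726123710,-34706322451,8843488395,-1018154735,28007143,150514],
[-5608021,573029758,-7509616244,29941327459,-46396295747,24362917994,7792691962,-12856711395,4961489079,-709910700,21140580,105533],
[874854,-109181057,1799220455,-9373631317,20756991394,-22532533183,12646934297,-3708236711,541029533,-13737570,-3412928,63242],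
[-157642,21334304,-383472084,2220388808,-5765614606,8182107178,-6977860059,3631575290,-1120192180,176816259,-9931219,77384],
[35503,-5073191,86093368,-321395834,-333176268,3166547659,-5092583372,3388106328,-1020340336,129712225,-5401992,31252],
[-30700,6178552,-171021010,1536882274,-5884612171,10859298688,-10197561937,4902914792,-1155111071,118621041,-4051034,19444],
[5054,-910293,20678517,-127817229,191629628,332713936,-1052945563,876845863,-287701017,36353399,-1405289,7197],
[-1887,435922,-13804184,140802673,-603440026,1220289830,-1220289830,603440026,-140802673,13804184,-435922,1887]],
[[44603075,-597131606,2530317847,-5994853979,9070840571,-8791378327,5014675986,-1592800525,252608849,-6914584,426865],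
[-4902053,255616777,-2285882693,8474792801,-15878479140,16051190521,-8744126253,2473595434,-317508073,14750479,110608],
[3596060,-154995872,1034127253,-3536070923,6718547504,-7169967830,4146651552,-1269834563,187569714,-7454066,152450],
[-140314,8490622,-74911537,276937744,-547752085,605152399,-391959468,140688956,-25853239,1609857,-7202],
[124523,-9494122,93073833,-296131846,405559434,-200894787,-49069379,82488983,-26173232,2180234,-19795],
[-69593,6662880,-85583484,370965783,-756912335,820766237,-477534430,140986239,-16671508,331825,4605],
[30739,-3147180,40996290,-166601454,306724479,-318916252,191579493,-64413286,12045472,-916719,10003],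
[-9530,1316124,-24277725,141581824,-343142789,387227759,-206561840,47558162,-3531461,3192,1038],
[1805,-274706,5525414,-34467388,87204799,-101519911,58058977,-16531497,2162434,-98864,649],
[-461,79348,-1811293,12793677,-36065280,44808292,-25036937,6007005,-538792,12812,-24],
[496,-94200,2402100,-19216803,62454611,-91600096,62454611,-19216803,2402100,-94200,496]]]
def C3 : ℕ := 147164688285696
/-! ### certificate polynomials -/
def kr {R : Type} [CommRing R] (b : R) : List ℤ → R
  | [] => 0
  | c :: l => (c : R) + b * kr b l
def dotF {R : Type} [CommRing R] (a b : R) : List (List ℤ) → R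
  | [] => 0
  | f :: fs => kr a f * kr b f + dotF a b fs
def FF {R : Type} [CommRing R] (k : ℕ) (a b : R) : R := dotF a b (cF.getD k [])
def EE {R : Type} [CommRing R] (F0 F1 F2 F3 F4 F5 F6 s w o : R) : R :=
  4096 * F0 * o ^ 16 + 1024 * s * F1 * o ^ 15 + 256 * (11 * s ^ 2 - w) * F2 * o ^ 14
  + 64 * (13 * s ^ 3 - 3 * s * w) * F3 * o ^ 13
  + 16 * (65 * s ^ 4 - 26 * s ^ 2 * w + w ^ 2) * F4 * o ^ 12
  + 4 * (17 * s ^ 5 - 10 * s ^ 3 * w + s * w ^ 2) * F5 * o ^ 11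
  + (323 * s ^ 6 - 255 * s ^ 4 * w + 45 * s ^ 2 * w ^ 2 - w ^ 3) * F6 * o ^ 10
def E3 {R : Type} [CommRing R] (a b c : R) : R :=
  EE (FF 0 a b) (FF 1 a b) (FF 2 a b) (FF 3 a b) (FF 4 a b) (FF 5 a b) (FF 6 a b)
    (2 * (c - 2) * (1 + a) * (1 + b) - (a - 2) * (b - 2) * (1 + c))
    ((12 * a + 3 * a ^ 2) * (12 * b + 3 * b ^ 2) * (1 + c) ^ 2) (1 + c)
def ES {R : Type} [CommRing R] (a b c : R) : R := E3 a b c + E3 b c a + E3 c a b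

/-! ### packed numbers -/
def pk (s : ℕ) (f : ℕ → ℕ) : ℕ → ℕ
  | 0 => 0
  | n + 1 => Nat.lor (pk s f n) (Nat.shiftLeft (f n) (Nat.mul s n))
def pk3 (w : ℕ) (f : ℕ → ℕ → ℕ → ℕ) : ℕ :=
  pk (w * 289) (fun i => pk (w * 17) (fun j => pk w (fun k => f i j k) 17) 17) 17
def dgW (w y q : ℕ) : ℕ := Nat.mod (Nat.shiftRight y (Nat.mul w q)) (2 ^ w)

def bl : List ℕ := [1,16,120,560,1820,4368,8008,11440,12870,11440,8008,4368,1820,560,120,16,1]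
def bn (i : ℕ) : ℕ := bl.getD i 0
def keep : ℕ := pk3 64 (fun _ _ _ => 2 ^ 63 - 1)
def m0 : ℕ → ℕ
  | 0 => 2 ^ (64 * 289) - 1
  | 1 => pk (64 * 289) (fun _ => 2 ^ (64 * 17) - 1) 17
  | _ => pk (64 * 17) (fun _ => 2 ^ 64 - 1) 289
def strd : ℕ → ℕ | 0 => 289 | 1 => 17 | _ => 1
def onesP : ℕ := pk3 64 (fun _ _ _ => 1)
def hi62 : ℕ := Nat.mul onesP (2 ^ 62)
def hi63 : ℕ := Nat.mul onesP (2 ^ 63)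

/-- offset packed exact tensor -/
def offA : ℕ := pk3 256 (fun _ _ _ => 2 ^ 254)
def PZ : ℕ := (ES ((2:ℤ) ^ (256 * 289)) ((2:ℤ) ^ (256 * 17)) ((2:ℤ) ^ 256) + (offA : ℤ)).toNat
def cZ : ℕ := 2 ^ 62 * 2 ^ 17 - C3
def ctr (i j k : ℕ) : ℕ := Nat.mul (Nat.mul (bn i) (bn j)) (bn k)
def dP (i j k : ℕ) : ℕ := dgW 256 (dgW (256 * 17) (dgW (256 * 289) PZ i) j) k
def zP (i j k : ℕ) : ℕ := Nat.add (Nat.mul cZ (ctr i j k)) (2 ^ 254)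
def y0 (i j k : ℕ) : ℕ :=
  Nat.mod (Nat.div (Nat.sub (zP i j k) (dP i j k)) (Nat.mul (2 ^ 17) (ctr i j k))) (2 ^ 63)
def allB (f : ℕ → Bool) : ℕ → Bool
  | 0 => true
  | n + 1 => and (f n) (allB f n)
def rootOK : Bool := allB (fun i => allB (fun j => allB (fun k =>
   and (Nat.ble (dP i j k) (zP i j k)) (Nat.blt 0 (ctr i j k))) 17) 17) 17
def Y0 : ℕ := pk3 64 y0
/-- determinant -/
def qd (i : ℕ) : ℤ := 4 * ((16 - i) * (15 - i)) - 4 * (i * (16 - i)) + i * (i - 1)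
def dn (i j k : ℕ) : ℤ :=
  8 * 61440 + 30 * (3 * i - 32) * (3 * j - 32) * (3 * k - 32) - 512 * (qd i + qd j + qd k)
def n0 (i j k : ℕ) : ℕ := ((2 ^ 33 + Int.fdiv (-(dn i j k) * 2 ^ 27) 61440).toNat) % 2 ^ 34
def D0 : ℕ := pk3 64 n0

/-! ### checker -/
def loop (m0 st : ℕ) : ℕ → ℕ → ℕ → ℕ → ℕ → (ℕ → ℕ → Bool) → Bool
  | 0, _, _, L, R, k => k L R
  | l + 1, c, sh, L, R, k =>
     loop m0 st l (Nat.land (Nat.shiftRight (Nat.add c (Nat.shiftRight c st)) 1) keep) (Nat.add sh st)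
       (Nat.lor L (Nat.shiftLeft (Nat.land c m0) sh))
       (Nat.lor R (Nat.land c (Nat.shiftLeft m0 (Nat.mul l st)))) k
def split (ax : ℕ) (c : ℕ) (k : ℕ → ℕ → Bool) : Bool :=
  loop (m0 ax) (Nat.mul 64 (strd ax)) 17 c 0 0 0 k
inductive Tr
  | l
  | o
  | m (s : ℕ)
  | a (x y : Tr)
  | b (x y : Tr)
  | c (x y : Tr)
def lfM (s g d : ℕ) : Bool :=
  and (Nat.ble (Nat.mul s (2 ^ 33)) (2 ^ 61))
   (Nat.beq (Nat.land (Nat.add (Nat.add g (Nat.mul s d)) (Nat.mul onesP (Nat.sub (2 ^ 62) (Nat.mul s (2 ^ 33))))) hi63) hi63)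
def chk : Tr → ℕ → ℕ → ℕ → ℕ → ℕ → ℕ → ℕ → ℕ → Bool
  | .l, g, _, _, _, _, _, _, _ => Nat.beq (Nat.land g hi62) hi62
  | .o, _, _, au, eu, av, ev, az, ez =>
      or (Nat.ble (Nat.mul (Nat.add av 1) (2 ^ eu)) (Nat.mul au (2 ^ ev)))
         (Nat.ble (Nat.mul (Nat.add az 1) (2 ^ ev)) (Nat.mul av (2 ^ ez)))
  | .m s, g, d, _, _, _, _, _, _ => lfM s g d
  | .a x y, g, d, au, eu, av, ev, az, ez => split 0 g fun gl gr => split 0 d fun dl dr =>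
      and (chk x gl dl (Nat.mul 2 au) (Nat.add eu 1) av ev az ez)
        (chk y gr dr (Nat.add (Nat.mul 2 au) 1) (Nat.add eu 1) av ev az ez)
  | .b x y, g, d, au, eu, av, ev, az, ez => split 1 g fun gl gr => split 1 d fun dl dr =>
      and (chk x gl dl au eu (Nat.mul 2 av) (Nat.add ev 1) az ez)
        (chk y gr dr au eu (Nat.add (Nat.mul 2 av) 1) (Nat.add ev 1) az ez)
  | .c x y, g, d, au, eu, av, ev, az, ez => split 2 g fun gl gr => split 2 d fun dl dr =>
      and (chk x gl dl au eu av ev (Nat.mul 2 az) (Nat.add ez 1))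
        (chk y gr dr au eu av ev (Nat.add (Nat.mul 2 az) 1) (Nat.add ez 1))
def treeF : Tr := (.a (.b (.c (.a (.b (.m 259651) (.c .o (.a .l (.b (.c (.m 27659) (.c (.b (.m 5129) (.a (.m 2117) (.c (.b (.m 2052) (.a (.m 1127) (.a (.m 860) (.b (.m 660) (.a (.m 429) (.m 334)))))) (.b (.a (.m 1040) (.a (.m 795) (.c (.m 601) (.b (.m 385) (.m 214))))) (.a (.m 430) (.b (.a (.m 344) (.m 200)) (.m 48))))))) (.b (.a (.m 1193) (.c (.b (.m 1213) (.a (.m 820) (.c (.m 615) (.a (.m 386) (.m 222))))) (.b (.m 504) (.a (.c (.m 336) (.m 198)) (.b (.m 208) (.a (.m 139) .l)))))) (.b (.a (.m 416) (.c (.b (.a (.m 443) (.a (.b (.m 342) (.m 264)) (.a (.m 191) (.m 69)))) (.a (.m 240) (.a (.m 168) .l))) (.a (.c (.m 142) (.m 56)) (.m 17)))) (.a .l .l))))) (.c .o (.b (.b (.c (.a (.m 382) (.c (.a (.m 401) (.a (.m 315) (.m 162))) .l)) .l) .l) .l)))))) (.b .o (.c .o (.a (.b (.c (.b (.a (.m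 13123) .o) (.c .o (.a (.a (.c (.m 2475) (.b (.m 1528) (.a (.b (.m 903) (.a (.m 661) (.m 532))) (.b (.a (.m 609) (.m 467)) (.a (.m 399) (.m 247)))))) (.b (.c (.m 1413) (.a (.a (.m 786) (.m 636)) (.b (.m 495) (.m 244)))) (.c .o (.a (.b (.m 318) (.m 40)) .l)))) (.a (.b (.c (.a (.m 720) (.a (.m 459) (.m 338))) (.a (.m 214) .l)) (.c .o .l)) (.b .o .l))))) (.c (.a (.b (.c (.a (.m 2306) (.b .o (.a (.b (.m 799) (.m 557)) (.b .o (.a (.m 311) (.m 174)))))) (.a (.b (.m 1245) (.c (.a (.m 746) (.m 523)) (.a (.m 481) (.a (.m 291) (.m 195))))) (.b .o (.a (.b (.a (.m 326) (.m 225)) (.m 103)) (.m 103))))) (.a (.c (.b (.a (.c (.m 871) (.a (.m 619) (.m 503))) (.c (.a (.m 598) (.m 469)) (.a (.m 385) (.m 257)))) (.a (.b (.c (.m 445) (.m 219)) (.a (.m 211) .l)) (.a (.m 162) .l))) (.b (.a (.c (.b (.m 401) (.m 219)) (.a (.m 188) (.m 27))) (.b (.m 160) .l)) .l)) (.a (.b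 (.b (.c (.a (.m 337) (.m 190)) .l) (.m 65)) .l) .l))) (.b .o .l)) (.a (.b (.c (.a (.b (.c (.m 543) (.m 291)) (.a (.b (.m 251) (.m 117)) (.m 45))) (.b .o .l)) (.a (.a (.m 77) .l) .l)) .l) .l))) (.c .o (.a .l (.b (.c .l .l) (.c .o (.a (.a .l .l) (.b (.c (.b .l (.a .l .l)) .l) (.a .l .l)))))))) (.b .o (.c .o (.a (.b (.c (.a .l (.b .o (.c .o (.a .l (.a .l .l))))) (.c (.a .l (.b .o .l)) .l)) (.c .o (.b (.c (.a (.b (.a .l .l) (.a .l .l)) .l) .l) .l))) (.b .o (.c .o .l))))))))) (.a (.b (.c (.a .l (.b .o (.c (.c (.m 261) .l) (.a (.c .l (.b .l (.c (.b (.b .l .l) .l) .l))) (.b .o (.c .l (.c (.b (.a (.a (.b (.c (.a .l .l) (.c (.a .l (.b .o (.a (.b .l .l) .l))) .l)) (.c .l (.a .l .l))) (.b .o .l)) .o) .l) .l))))))) (.c (.c .l .l) (.c .l (.c .l (.c (.a (.a (.m 453) .l) .l) (.a (.b (.a (.m 9998) (.b .o .l)) (.a (.a (.a (.m 2425) .l)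 .l) .l)) (.b .o (.a (.b .l .l) (.b .o .l))))))))) (.c (.a .l (.a (.a .l (.c (.b (.a .l (.a .l (.c (.b (.c (.m 95) .l) .l) (.b .l (.c (.b .l .l) (.b .l (.b .l .l))))))) (.c .l (.c (.b .l .l) (.b .l .l)))) (.b (.b .l .l) (.b .l (.c .l .l))))) (.c (.b (.c (.c (.b (.b (.m 152) (.a (.c (.m 102) (.m 28)) .l)) (.m 5)) .l) (.b .l (.a (.c (.b .l (.a .l .l)) (.b .l (.a (.c (.b .l .l) .l) .l))) .l))) (.c .l (.a (.c (.b .l (.a (.b .l (.c (.a .l .l) (.a (.b .l (.c .l .l)) (.b .l .l)))) .l)) (.b (.a (.a .l .l) .l) (.a (.b (.c (.a .l .l) .l) (.a (.b .l .l) .l)) .l))) .l))) (.b (.b .l (.a .l .l)) (.a (.b (.c .l .l) (.c .l (.a (.b (.a .l .l) .l) .l))) (.b .l .l)))))) (.a (.b (.c .l (.b .l (.a .l .l))) (.c (.a .l (.c .l (.b .l .l))) (.b .l .l))) (.c (.b (.c (.b .l (.a (.c (.b .l .l) .l) (.c (.b .l (.a (.b .l .l) .l)) .l))) (.b .l .l))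 (.c (.a (.c .l .l) (.a (.c (.b .l (.a .l .l)) .l) .l)) .l)) (.b (.a .l (.b .l (.a (.b .l .l) .l))) (.b (.a .l .l) (.a .l .l))))))) (.b .o (.c (.a (.b (.c (.c (.a .l (.b .o (.c (.a .l (.b .o (.c .l (.a .l (.b .o .l))))) (.a .l (.b .o .l))))) (.a .l (.b .o (.a .l (.b .o .l))))) (.a (.c .l (.b .l (.a .l .l))) (.b .o (.c .l .l)))) (.c (.a (.b (.c .l .l) (.c .l .l)) (.b (.c (.a (.b (.b .l .l) .l) (.c (.b (.a .l (.a .l .l)) .l) (.a .l .l))) (.a (.b .l .l) .l)) (.c (.a .l .l) .l))) (.a .l .l))) (.b .o (.c (.c .l (.a (.b .l .l) (.b .o .l))) (.a (.b .l .l) (.b .o .l))))) (.c (.a (.b (.c (.a (.b (.a .l .l) .l) (.c .l .l)) (.a (.b (.a (.b .l .l) .l) .l) .l)) (.b (.c (.c .l .l) .l) (.c (.a .l .l) .l))) (.b .o (.c (.c .l .l) (.a (.b (.c (.a .l .l) .l) .l) .l)))) (.a (.b .l (.b .l .l)) (.b .o (.c .l (.c .l (.c .l (.c .l (.a (.a .l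 .l) .l)))))))))))) (.c .o (.b (.c (.a (.a (.c (.b .l .o) (.b (.a (.b .l .l) (.b .l .l)) .l)) (.b (.c (.a (.a .l (.b (.c (.b .l (.c .o (.b (.b .l .l) .l))) (.b (.c (.c (.b .l .l) .l) .l) .l)) (.c .o .l))) (.c (.b (.a (.b (.c .l (.a (.c .l (.b .l (.a (.c .l (.b .l .l)) (.b .l .l)))) .l)) (.c .o (.a (.c (.b (.a (.b .l (.c .o .l)) (.b .l .l)) .o) (.b (.a (.c (.b .l .l) .l) .l) .l)) .l))) .l) .o) (.b (.a (.c (.b (.a (.c (.b (.a (.c (.a .l .l) (.b (.a .l .l) (.a .l .l))) (.b .l .l)) (.a (.c (.b (.a .l .l) .l) .l) .l)) (.a (.b (.a .l (.b .l .l)) .l) .l)) .l) .l) .l) .l) .l))) (.a .l (.a (.c .l (.b .l .l)) .l))) (.c .o (.a .l (.a (.b (.c (.a .l .l) .l) .l) .l))))) (.a (.a (.b (.c .l (.b .l .l)) (.c .o .l)) (.b (.c .l (.b .l .l)) (.c .o .l))) (.b (.c (.b .l .l) .l) (.c .o .l)))) (.a (.b (.a (.b .l (.c (.c .l .l) .l))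 (.c (.c (.a (.b .l .l) (.c (.a (.b (.a .l .l) .l) (.b .l .l)) (.a (.a .l .l) .l))) .l) (.a (.b .l .l) (.b .l (.a (.b (.a .l .l) .l) .l))))) (.a .l (.b (.c (.c (.a (.c .l .l) (.c (.a .l .l) .l)) .l) .l) (.a (.c (.c (.a .l .l) .l) (.b .l .l)) (.b (.a (.c (.c (.c .l .l) .l) (.b .l (.b (.a (.a .l .l) .l) (.a .l .l)))) .l) (.c .l .l)))))) (.b (.c (.a (.c (.c .l (.a .l .l)) .l) (.c .l .l)) (.a .l .l)) (.a (.b (.c (.c (.a .l (.c .l .l)) (.a .l .l)) .l) (.c (.a (.c (.a .l .l) .l) (.c .l .l)) (.a .l .l))) (.c (.c .l (.a .l .l)) (.b .l .l)))))) (.c .o (.a (.a (.a (.b (.c (.a (.a (.m 1086) (.m 576)) (.b (.a (.m 89) .l) (.m 27))) (.m 15834)) (.m 20102)) (.a (.a (.b (.c .l (.m 2027)) (.m 2588)) (.b (.c .l (.m 647)) (.m 837))) (.b (.b .l .l) .l))) (.b (.c (.c (.b (.a (.b (.b .l .l) .l) (.b (.c (.a (.b .l (.a .l .l)) .l) (.a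 .l .l)) (.c .o (.a (.c (.a .l .l) .l) (.b .l .l))))) .o) (.b .l .l)) .l) .l)) (.c (.b (.a (.b (.c .l .l) (.c .o .l)) (.a .l .l)) .o) (.a (.b (.b (.a .l (.b (.b (.a .l .l) .l) .l)) .l) .l) (.c .l (.a (.b (.b (.b .l .l) .l) .l) (.a (.b (.b .l .l) .l) (.a (.b .l (.a .l .l)) .l))))))))))) (.b .o (.c .o (.c (.b (.a (.c (.b (.a .l .o) .o) (.a (.b .l .l) (.b .o (.a .l (.a .l .l))))) .o) .o) (.a (.b (.c (.c (.a (.a .l .l) (.b .o .l)) (.b .l (.a .l .l))) (.c (.a .l (.b .o (.a .l .l))) (.a (.b .l .l) (.b .o (.a (.b .l .l) (.b .o (.a .l .l))))))) (.b (.c (.a (.b .l .l) (.b (.c (.b .l (.c .o .l)) .l) .l)) (.a .l (.a .l .l))) (.c .o (.a (.a .l (.a .l .l)) (.b (.c .l (.c .l (.a .l (.a .l .l)))) (.c .o (.a .l .l))))))) (.b .o (.a (.b (.b (.c (.a (.c .l .l) .o) (.a .l .o)) (.a .l .l)) (.c .o (.b .l (.c .o (.a (.a .l .l) .l))))) (.b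 .o (.c .o (.c (.b .l .o) (.a (.b .l .l) (.b .o .l))))))))))))
end Kiss

namespace Kiss
section bern
def bb (i : ℕ) (x : ℝ) : ℝ := (Nat.choose 16 i : ℝ) * x ^ i * (1 - x) ^ (16 - i)
def Bn (x : ℝ) (f : ℕ → ℝ) : ℝ := ∑ i ∈ Finset.range 17, bb i x * f i
lemma bb_nonneg {x : ℝ} (h0 : 0 ≤ x) (h1 : x ≤ 1) (i : ℕ) : 0 ≤ bb i x := by
  have : 0 ≤ 1 - x := by linarith
  unfold bb; positivity
lemma Bn_mono {x : ℝ} (h0 : 0 ≤ x) (h1 : x ≤ 1) {f g : ℕ → ℝ} (h : ∀ i < 17, f i ≤ g i) : Bn x f ≤ Bn x g :=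
  Finset.sum_le_sum fun i hi => mul_le_mul_of_nonneg_left (h i (Finset.mem_range.1 hi)) (bb_nonneg h0 h1 i)
lemma Bn_congr {x : ℝ} {f g : ℕ → ℝ} (h : ∀ i < 17, f i = g i) : Bn x f = Bn x g :=
  Finset.sum_congr rfl fun i hi => by rw [h i (Finset.mem_range.1 hi)]
lemma Bn_comm (x y : ℝ) (f : ℕ → ℕ → ℝ) : Bn x (fun i => Bn y fun j => f i j) = Bn y fun j => Bn x fun i => f i j := by
  unfold Bn
  simp only [Finset.mul_sum]
  rw [Finset.sum_comm]
  refine Finset.sum_congr rfl fun i _ => Finset.sum_congr rfl fun j _ => by ring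
lemma Bn_add (x : ℝ) (f g : ℕ → ℝ) : Bn x (fun i => f i + g i) = Bn x f + Bn x g := by
  unfold Bn; simp only [mul_add, Finset.sum_add_distrib]
lemma Bn_smul (x c : ℝ) (f : ℕ → ℝ) : Bn x (fun i => c * f i) = c * Bn x f := by
  unfold Bn; rw [Finset.mul_sum]; exact Finset.sum_congr rfl fun i _ => by ring
lemma sum_bb (x : ℝ) : ∑ i ∈ Finset.range 17, bb i x = 1 := by
  have := add_pow x (1 - x) 16
  rw [add_sub_cancel, one_pow] at this
  rw [this]
  refine Finset.sum_congr rfl fun i _ => ?_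
  unfold bb; ring
lemma Bn_const (x c : ℝ) : Bn x (fun _ => c) = c := by
  unfold Bn; rw [← Finset.sum_mul, sum_bb, one_mul]

noncomputable def Sh : Module.End ℝ (ℕ → ℝ) := LinearMap.funLeft ℝ ℝ (fun i => i + 1)
lemma Sh_apply (f : ℕ → ℝ) (i : ℕ) : Sh f i = f (i + 1) := rfl
lemma Sh_pow (n : ℕ) (f : ℕ → ℝ) (i : ℕ) : (Sh ^ n) f i = f (i + n) := by
  induction n generalizing f i with
  | zero => rfl
  | succ n ih => rw [pow_succ', Module.End.mul_apply, Sh_apply, ih]; congr 1; ring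
lemma Bn_eq_aux (x : ℝ) (P Q : Module.End ℝ (ℕ → ℝ)) (h : Commute P Q) (f : ℕ → ℝ) :
    ((x • Q + (1 - x) • P) ^ 16) f 0 = Bn x (fun i => (Q ^ i * P ^ (16 - i)) f 0) := by
  have hc : Commute (x • Q) ((1 - x) • P) := (h.symm.smul_left x).smul_right (1 - x)
  rw [hc.add_pow]
  unfold Bn bb
  rw [LinearMap.sum_apply, Finset.sum_apply]
  refine Finset.sum_congr rfl fun i _ => ?_
  rw [smul_pow, smul_pow, smul_mul_smul_comm, Module.End.mul_apply, Module.End.natCast_apply]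
  rw [map_nsmul]
  simp only [LinearMap.smul_apply, Pi.smul_apply, smul_eq_mul, nsmul_eq_mul]
  ring
lemma Bn_eq (x : ℝ) (f : ℕ → ℝ) : Bn x f = ((x • Sh + (1 - x) • (1 : Module.End ℝ (ℕ → ℝ))) ^ 16) f 0 := by
  rw [Bn_eq_aux x 1 Sh (Commute.one_left _)]
  refine Bn_congr fun i _ => ?_
  rw [one_pow, mul_one, Sh_pow, zero_add]

noncomputable def Av : Module.End ℝ (ℕ → ℝ) := (1/2 : ℝ) • (1 + Sh)
lemma Av_pow_ge (c : ℕ → ℕ → ℝ) (h : ∀ r i, r + i < 16 → c (r+1) i ≤ (c r i + c r (i+1)) / 2) (r i : ℕ)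
    (hr : r + i ≤ 16) : c r i ≤ (Av ^ r) (c 0) i := by
  induction r generalizing i with
  | zero => simp
  | succ r ih =>
    rw [pow_succ', Module.End.mul_apply]
    have h1 := ih i (by omega)
    have h2 := ih (i+1) (by omega)
    have h3 := h r i (by omega)
    have : Av ((Av ^ r) (c 0)) i = ((Av ^ r) (c 0) i + (Av ^ r) (c 0) (i+1)) / 2 := by
      simp [Av, Sh_apply]; ring
    rw [this]; linarith
lemma Bn_left {x : ℝ} (h0 : 0 ≤ x) (h1 : x ≤ 1) (c : ℕ → ℕ → ℝ)
    (h : ∀ r i, r + i < 16 → c (r+1) i ≤ (c r i + c r (i+1)) / 2) :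
    Bn x (fun i => c i 0) ≤ Bn (x / 2) (c 0) := by
  rw [Bn_eq (x / 2)]
  have : ((x / 2) • Sh + (1 - x / 2) • (1 : Module.End ℝ (ℕ → ℝ))) = x • Av + (1 - x) • 1 := by
    unfold Av; module
  rw [this, Bn_eq_aux x 1 Av (Commute.one_left _)]
  refine Bn_mono h0 h1 fun i hi => ?_
  rw [one_pow, mul_one]
  exact Av_pow_ge c h i 0 (by omega)
lemma Bn_right {x : ℝ} (h0 : 0 ≤ x) (h1 : x ≤ 1) (c : ℕ → ℕ → ℝ)
    (h : ∀ r i, r + i < 16 → c (r+1) i ≤ (c r i + c r (i+1)) / 2) :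
    Bn x (fun i => c (16 - i) i) ≤ Bn ((1 + x) / 2) (c 0) := by
  rw [Bn_eq ((1 + x) / 2)]
  have : (((1 + x) / 2) • Sh + (1 - (1 + x) / 2) • (1 : Module.End ℝ (ℕ → ℝ))) = x • Sh + (1 - x) • Av := by
    unfold Av; module
  have hc : Commute Av Sh := ((Commute.one_left _).add_left (Commute.refl _)).smul_left _
  rw [this, Bn_eq_aux x Av Sh hc]
  refine Bn_mono h0 h1 fun i hi => ?_
  rw [Module.End.mul_apply, Sh_pow, zero_add]
  exact Av_pow_ge c h (16 - i) i (by omega)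

def E (c : ℕ → ℝ) (x y z : ℝ) : ℝ := Bn x fun i => Bn y fun j => Bn z fun k => c (289 * i + 17 * j + k)
lemma E_mono {x y z : ℝ} (hx : 0 ≤ x) (hx' : x ≤ 1) (hy : 0 ≤ y) (hy' : y ≤ 1) (hz : 0 ≤ z) (hz' : z ≤ 1)
    {c d : ℕ → ℝ} (h : ∀ q < 4913, c q ≤ d q) : E c x y z ≤ E d x y z :=
  Bn_mono hx hx' fun i hi => Bn_mono hy hy' fun j hj => Bn_mono hz hz' fun k hk => h _ (by omega)
lemma E_add (c d : ℕ → ℝ) (x y z : ℝ) : E (fun q => c q + d q) x y z = E c x y z + E d x y z := by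
  simp only [E, Bn_add]
lemma E_smul (s : ℝ) (d : ℕ → ℝ) (x y z : ℝ) : E (fun q => s * d q) x y z = s * E d x y z := by
  simp only [E, Bn_smul]
lemma E_const (c x y z : ℝ) : E (fun _ => c) x y z = c := by
  simp only [E, Bn_const]
/-- abstract split in axis with stride `st`; `d r q` is the r-th de Casteljau row -/
structure Spl (st : ℕ) (d : ℕ → ℕ → ℕ) (l r : ℕ → ℕ) : Prop where
  rc : ∀ n q, q < 4913 → d (n+1) q = (d n q + d n (q + st)) / 2
  hl : ∀ q < 4913, l q = d ((q / st) % 17) (q - st * ((q / st) % 17))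
  hr : ∀ q < 4913, r q = d (16 - (q / st) % 17) q
def up (x : ℝ) : Prop := 0 ≤ x ∧ x ≤ 1
lemma half_le (a b : ℕ) : (((a + b) / 2 : ℕ) : ℝ) ≤ ((a : ℝ) + b) / 2 := by
  have := @Nat.cast_div_le ℝ _ _ _ (a + b) 2
  push_cast at this ⊢; exact this
lemma E_axis0 (c : ℕ → ℝ) (x y z : ℝ) : E c x y z = Bn y fun j => Bn z fun k => Bn x fun i => c (289 * i + 17 * j + k) := by
  unfold E
  rw [Bn_comm]
  exact Bn_congr fun j _ => Bn_comm _ _ _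
lemma E_axis1 (c : ℕ → ℝ) (x y z : ℝ) : E c x y z = Bn x fun i => Bn z fun k => Bn y fun j => c (289 * i + 17 * j + k) := by
  unfold E
  exact Bn_congr fun j _ => Bn_comm _ _ _
lemma sp0 {d l r} (h : Spl 289 d l r) {x y z : ℝ} (hx : up x) (hy : up y) (hz : up z) :
    E (fun q => (l q : ℝ)) x y z ≤ E (fun q => (d 0 q : ℝ)) (x/2) y z ∧
    E (fun q => (r q : ℝ)) x y z ≤ E (fun q => (d 0 q : ℝ)) ((1+x)/2) y z := by
  have key : ∀ j < 17, ∀ k < 17, ∀ r i, r + i < 16 →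
      (d (r+1) (289 * i + 17 * j + k) : ℝ) ≤ (d r (289 * i + 17 * j + k) + d r (289 * (i+1) + 17 * j + k)) / 2 := by
    intro j hj k hk r i hi
    rw [h.rc _ _ (by omega), show 289 * (i+1) + 17 * j + k = 289 * i + 17 * j + k + 289 by ring]
    exact half_le _ _
  simp only [E_axis0]
  constructor <;> refine Bn_mono hy.1 hy.2 fun j hj => Bn_mono hz.1 hz.2 fun k hk => ?_
  · refine le_trans (le_of_eq ?_) (Bn_left hx.1 hx.2 (fun r i => (d r (289 * i + 17 * j + k) : ℝ)) (key j hj k hk))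
    refine Bn_congr fun i hi => ?_
    rw [h.hl _ (by omega), show (289 * i + 17 * j + k) / 289 % 17 = i by omega]
    congr 2; omega
  · refine le_trans (le_of_eq ?_) (Bn_right hx.1 hx.2 (fun r i => (d r (289 * i + 17 * j + k) : ℝ)) (key j hj k hk))
    refine Bn_congr fun i hi => ?_
    rw [h.hr _ (by omega), show (289 * i + 17 * j + k) / 289 % 17 = i by omega]
lemma sp1 {d l r} (h : Spl 17 d l r) {x y z : ℝ} (hx : up x) (hy : up y) (hz : up z) :
    E (fun q => (l q : ℝ)) x y z ≤ E (fun q => (d 0 q : ℝ)) x (y/2) z ∧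
    E (fun q => (r q : ℝ)) x y z ≤ E (fun q => (d 0 q : ℝ)) x ((1+y)/2) z := by
  have key : ∀ i < 17, ∀ k < 17, ∀ r j, r + j < 16 →
      (d (r+1) (289 * i + 17 * j + k) : ℝ) ≤ (d r (289 * i + 17 * j + k) + d r (289 * i + 17 * (j + 1) + k)) / 2 := by
    intro i hi k hk r j hj
    rw [h.rc _ _ (by omega), show 289 * i + 17 * (j+1) + k = 289 * i + 17 * j + k + 17 by ring]
    exact half_le _ _
  simp only [E_axis1]
  constructor <;> refine Bn_mono hx.1 hx.2 fun i hi => Bn_mono hz.1 hz.2 fun k hk => ?_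
  · refine le_trans (le_of_eq ?_) (Bn_left hy.1 hy.2 (fun r j => (d r (289 * i + 17 * j + k) : ℝ)) (key i hi k hk))
    refine Bn_congr fun j hj => ?_
    rw [h.hl _ (by omega), show (289 * i + 17 * j + k) / 17 % 17 = j by omega]
    congr 2; omega
  · refine le_trans (le_of_eq ?_) (Bn_right hy.1 hy.2 (fun r j => (d r (289 * i + 17 * j + k) : ℝ)) (key i hi k hk))
    refine Bn_congr fun j hj => ?_
    rw [h.hr _ (by omega), show (289 * i + 17 * j + k) / 17 % 17 = j by omega]
lemma sp2 {d l r} (h : Spl 1 d l r) {x y z : ℝ} (hx : up x) (hy : up y) (hz : up z) :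
    E (fun q => (l q : ℝ)) x y z ≤ E (fun q => (d 0 q : ℝ)) x y (z/2) ∧
    E (fun q => (r q : ℝ)) x y z ≤ E (fun q => (d 0 q : ℝ)) x y ((1+z)/2) := by
  have key : ∀ i < 17, ∀ j < 17, ∀ r k, r + k < 16 →
      (d (r+1) (289 * i + 17 * j + k) : ℝ) ≤ (d r (289 * i + 17 * j + k) + d r (289 * i + 17 * j + (k+1))) / 2 := by
    intro i hi j hj r k hk
    rw [h.rc _ _ (by omega), show 289 * i + 17 * j + (k+1) = 289 * i + 17 * j + k + 1 by ring]
    exact half_le _ _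
  unfold E
  constructor <;> refine Bn_mono hx.1 hx.2 fun i hi => Bn_mono hy.1 hy.2 fun j hj => ?_
  · refine le_trans (le_of_eq ?_) (Bn_left hz.1 hz.2 (fun r k => (d r (289 * i + 17 * j + k) : ℝ)) (key i hi j hj))
    refine Bn_congr fun k hk => ?_
    show (l (289 * i + 17 * j + k) : ℝ) = _
    rw [h.hl _ (by omega), show (289 * i + 17 * j + k) / 1 % 17 = k by omega]
    congr 2; omega
  · refine le_trans (le_of_eq ?_) (Bn_right hz.1 hz.2 (fun r k => (d r (289 * i + 17 * j + k) : ℝ)) (key i hi j hj))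
    refine Bn_congr fun k hk => ?_
    show (r (289 * i + 17 * j + k) : ℝ) = _
    rw [h.hr _ (by omega), show (289 * i + 17 * j + k) / 1 % 17 = k by omega]
end bern
end Kiss

namespace Kiss
section pack
def dg (y q : ℕ) : ℕ := y / 2 ^ (64 * q) % 2 ^ 64
lemma dg_lt (y q : ℕ) : dg y q < 2 ^ 64 := Nat.mod_lt _ (by norm_num)
lemma dg_shr (y s q : ℕ) : dg (y >>> (64 * s)) q = dg y (q + s) := by
  unfold dg
  rw [Nat.shiftRight_eq_div_pow, Nat.div_div_eq_div_mul, ← pow_add]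
  congr 3; ring
lemma dg_shl (y s q : ℕ) : dg (y <<< (64 * s)) q = if q < s then 0 else dg y (q - s) := by
  unfold dg
  rw [Nat.shiftLeft_eq]
  split_ifs with h
  · obtain ⟨t, rfl⟩ := Nat.exists_eq_add_of_lt h
    rw [show 64 * (q + t + 1) = 64 * q + (64 + 64 * t) by ring, pow_add, pow_add,
      show y * (2 ^ (64 * q) * (2 ^ 64 * 2 ^ (64 * t))) = 2 ^ (64 * q) * (2 ^ 64 * (y * 2 ^ (64 * t))) by ring,
      Nat.mul_div_cancel_left _ (by positivity), Nat.mul_mod_right]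
  · obtain ⟨t, rfl⟩ := Nat.exists_eq_add_of_le (not_lt.1 h)
    rw [show 64 * (s + t) = 64 * s + 64 * t by ring, pow_add, ← Nat.div_div_eq_div_mul,
      Nat.mul_div_cancel _ (by positivity), Nat.add_sub_cancel_left]
lemma dg_land (a b q : ℕ) : dg (a &&& b) q = dg a q &&& dg b q := by
  unfold dg; rw [Nat.and_div_two_pow, Nat.and_mod_two_pow]
lemma dg_lor (a b q : ℕ) : dg (a ||| b) q = dg a q ||| dg b q := by
  unfold dg; rw [Nat.or_div_two_pow, Nat.or_mod_two_pow]
lemma dg_succ (a q : ℕ) : dg a (q+1) = dg (a / 2 ^ 64) q := by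
  unfold dg
  rw [Nat.div_div_eq_div_mul, ← pow_add]; congr 3; ring
lemma dg_add (a b : ℕ) (h : ∀ q, dg a q + dg b q < 2 ^ 64) (q : ℕ) : dg (a + b) q = dg a q + dg b q := by
  induction q generalizing a b with
  | zero =>
    have := h 0
    unfold dg at *; simp only [mul_zero, pow_zero, Nat.div_one] at *; omega
  | succ q ih =>
    have h0 := h 0
    have h1 : (a + b) / 2 ^ 64 = a / 2 ^ 64 + b / 2 ^ 64 := by
      unfold dg at h0; simp only [mul_zero, pow_zero, Nat.div_one] at h0; omega
    rw [dg_succ, h1, dg_succ a, dg_succ b]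
    exact ih _ _ fun q => by rw [← dg_succ, ← dg_succ]; exact h _
lemma dg_zero (q : ℕ) : dg 0 q = 0 := by simp [dg]
lemma dg_mul (s a : ℕ) (h : ∀ q, s * dg a q < 2 ^ 64) (q : ℕ) : dg (s * a) q = s * dg a q := by
  induction s generalizing q with
  | zero => simp [dg_zero]
  | succ s ih =>
    have ih := ih fun q => lt_of_le_of_lt (Nat.mul_le_mul_right _ (Nat.le_succ s)) (h q)
    rw [add_mul, one_mul, dg_add]
    · rw [ih]; ring
    · intro q; rw [ih]; have := h q; rw [add_mul, one_mul] at this; exact this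
lemma dg_half (a q : ℕ) : dg (a >>> 1) q &&& (2 ^ 63 - 1) = dg a q / 2 := by
  rw [Nat.and_two_pow_sub_one_eq_mod]
  unfold dg
  rw [Nat.shiftRight_eq_div_pow, Nat.div_div_eq_div_mul, mul_comm, ← Nat.div_div_eq_div_mul]
  generalize a / 2 ^ (64 * q) = t
  omega
lemma dg_big (y q n : ℕ) (h : y < 2 ^ (64 * n)) (hq : n ≤ q) : dg y q = 0 := by
  unfold dg
  rw [Nat.div_eq_of_lt, Nat.zero_mod]
  exact lt_of_lt_of_le h (Nat.pow_le_pow_right (by norm_num) (by omega))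

/-! pk -/
lemma pk_lt (s : ℕ) (f : ℕ → ℕ) (n : ℕ) (h : ∀ i < n, f i < 2 ^ s) : pk s f n < 2 ^ (s * n) := by
  induction n with
  | zero => simp [pk]
  | succ n ih =>
    have h1 := ih fun i hi => h i (by omega)
    have h2 := h n (by omega)
    change pk s f n ||| (f n <<< (s * n)) < _
    refine Nat.or_lt_two_pow (lt_of_lt_of_le h1 (Nat.pow_le_pow_right (by norm_num) (by nlinarith))) ?_
    rw [Nat.shiftLeft_eq, mul_add, mul_one, pow_add, mul_comm]
    exact Nat.mul_lt_mul_of_pos_left h2 (by positivity)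
lemma pk_dg (s : ℕ) (f : ℕ → ℕ) (n : ℕ) (h : ∀ i < n, f i < 2 ^ s) (i : ℕ) (hi : i < n) :
    pk s f n / 2 ^ (s * i) % 2 ^ s = f i := by
  induction n with
  | zero => omega
  | succ n ih =>
    have h1 := pk_lt s f n fun i hi => h i (by omega)
    have h2 := h n (by omega)
    change (pk s f n ||| (f n <<< (s * n))) / _ % _ = _
    rw [Nat.or_div_two_pow, Nat.or_mod_two_pow]
    rcases Nat.lt_succ_iff_lt_or_eq.1 hi with hlt | rfl
    · rw [ih (fun i hi => h i (by omega)) hlt, Nat.shiftLeft_eq]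
      obtain ⟨t, rfl⟩ := Nat.exists_eq_add_of_lt hlt
      rw [show s * (i + t + 1) = s * i + (s + s * t) by ring, pow_add, pow_add,
        show f (i+t+1) * (2 ^ (s * i) * (2 ^ s * 2 ^ (s * t))) = 2 ^ (s * i) * (2 ^ s * (f (i+t+1) * 2 ^ (s * t))) by ring,
        Nat.mul_div_cancel_left _ (by positivity), Nat.mul_mod_right, Nat.or_zero]
    · rw [Nat.div_eq_of_lt h1, Nat.zero_mod, Nat.zero_or, Nat.shiftLeft_eq,
        Nat.mul_div_cancel _ (by positivity), Nat.mod_eq_of_lt h2]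
lemma sub_dg (y a b c : ℕ) (h : b + c ≤ a) : (y % 2 ^ a) / 2 ^ b % 2 ^ c = y / 2 ^ b % 2 ^ c := by
  apply Nat.eq_of_testBit_eq
  intro i
  simp only [Nat.testBit_mod_two_pow, Nat.testBit_div_two_pow]
  by_cases hi : i < c
  · have : i + b < a := by omega
    simp [hi, this]
  · simp [hi]
/-- nested digits are flat digits -/
lemma nest (w y i j k : ℕ) (hi : i < 17) (hj : j < 17) (hk : k < 17) :
   (((y / 2 ^ (w * 289 * i) % 2 ^ (w * 289)) / 2 ^ (w * 17 * j) % 2 ^ (w * 17)) / 2 ^ (w * k) % 2 ^ w)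
    = y / 2 ^ (w * (289 * i + 17 * j + k)) % 2 ^ w := by
  rw [sub_dg _ _ _ _ (by nlinarith), Nat.div_div_eq_div_mul, ← pow_add, sub_dg _ _ _ _ (by nlinarith),
    Nat.div_div_eq_div_mul, ← pow_add]
  congr 3; ring
lemma pk3_lt (w : ℕ) (f : ℕ → ℕ → ℕ → ℕ) (h : ∀ i < 17, ∀ j < 17, ∀ k < 17, f i j k < 2 ^ w) :
    pk3 w f < 2 ^ (w * 4913) := by
  have := pk_lt (w * 289) (fun i => pk (w * 17) (fun j => pk w (fun k => f i j k) 17) 17) 17 ?_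
  · rw [show w * 289 * 17 = w * 4913 by ring] at this; exact this
  intro i hi
  have := pk_lt (w * 17) (fun j => pk w (fun k => f i j k) 17) 17 ?_
  · rw [show w * 17 * 17 = w * 289 by ring] at this; exact this
  intro j hj
  exact pk_lt w _ 17 (h i hi j hj)
lemma pk3_dg (w : ℕ) (f : ℕ → ℕ → ℕ → ℕ) (h : ∀ i < 17, ∀ j < 17, ∀ k < 17, f i j k < 2 ^ w)
    (i j k : ℕ) (hi : i < 17) (hj : j < 17) (hk : k < 17) :
    pk3 w f / 2 ^ (w * (289 * i + 17 * j + k)) % 2 ^ w = f i j k := by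
  have h1 : ∀ i < 17, ∀ j < 17, pk w (fun k => f i j k) 17 < 2 ^ (w * 17) := fun i hi j hj => pk_lt w _ 17 (h i hi j hj)
  have h2 : ∀ i < 17, pk (w * 17) (fun j => pk w (fun k => f i j k) 17) 17 < 2 ^ (w * 289) := by
    intro i hi
    have := pk_lt (w * 17) (fun j => pk w (fun k => f i j k) 17) 17 (h1 i hi)
    rw [show w * 17 * 17 = w * 289 by ring] at this; exact this
  rw [← nest w _ i j k hi hj hk, pk3, pk_dg _ _ _ h2 i hi, pk_dg _ _ _ (h1 i hi) j hj,
    pk_dg _ _ _ (h i hi j hj) k hk]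
lemma pk3_dg64 (f : ℕ → ℕ → ℕ → ℕ) (h : ∀ i < 17, ∀ j < 17, ∀ k < 17, f i j k < 2 ^ 64) (q : ℕ) :
    dg (pk3 64 f) q = if q < 4913 then f (q / 289) (q / 17 % 17) (q % 17) else 0 := by
  split_ifs with hq
  · have := pk3_dg 64 f h (q / 289) (q / 17 % 17) (q % 17) (by omega) (by omega) (by omega)
    rw [show 289 * (q / 289) + 17 * (q / 17 % 17) + q % 17 = q by omega] at this
    exact this
  · exact dg_big _ _ _ (pk3_lt 64 f h) (by omega)
lemma dg_keep (q : ℕ) : dg keep q = if q < 4913 then 2 ^ 63 - 1 else 0 := by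
  unfold keep; rw [pk3_dg64 _ (by intros; norm_num)]
lemma dg_ones (q : ℕ) : dg onesP q = if q < 4913 then 1 else 0 := by
  unfold onesP; rw [pk3_dg64 _ (by intros; norm_num)]
lemma dg_onesMul (c q : ℕ) (hc : c < 2 ^ 64) : dg (onesP * c) q = if q < 4913 then c else 0 := by
  rw [mul_comm, dg_mul]
  · rw [dg_ones]; split_ifs <;> simp
  · intro q; rw [dg_ones]; split_ifs <;> simp; exact hc

/-! masks -/
lemma allB_spec (f : ℕ → Bool) (n : ℕ) (h : allB f n = true) : ∀ i < n, f i = true := by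
  induction n with
  | zero => intro i hi; omega
  | succ n ih =>
    have h : (f n && allB f n) = true := h
    rw [Bool.and_eq_true] at h
    intro i hi
    rcases Nat.lt_succ_iff_lt_or_eq.1 hi with h' | rfl
    · exact ih h.2 i h'
    · exact h.1
def mkT (ax : ℕ) : Bool := and (Nat.blt (m0 ax) (2 ^ (64 * 4913))) (allB (fun q => Nat.beq (dgW 64 (m0 ax) q)
  (if Nat.beq (Nat.mod (Nat.div q (strd ax)) 17) 0 then 2 ^ 64 - 1 else 0)) 4913)
lemma mkT0 : mkT 0 = true := by decide +kernel
lemma mkT1 : mkT 1 = true := by decide +kernel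
lemma mkT2 : mkT 2 = true := by decide +kernel
lemma dgW_eq (y q : ℕ) : dgW 64 y q = dg y q := by
  unfold dgW dg
  change (y >>> (64 * q)) % 2 ^ 64 = _
  rw [Nat.shiftRight_eq_div_pow]
lemma dg_m0 (ax : ℕ) (hax : ax < 3) (q : ℕ) :
    dg (m0 ax) q = if q < 4913 ∧ (q / strd ax) % 17 = 0 then 2 ^ 64 - 1 else 0 := by
  have h : mkT ax = true := by
    interval_cases ax
    · exact mkT0
    · exact mkT1
    · exact mkT2
  unfold mkT at h
  rw [Bool.and_eq_true] at h
  by_cases hq : q < 4913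
  · have h2 := Nat.eq_of_beq_eq_true (allB_spec _ _ h.2 q hq)
    rw [dgW_eq] at h2
    rw [h2]
    by_cases hz : (q / strd ax) % 17 = 0
    · have e : Nat.beq (Nat.mod (Nat.div q (strd ax)) 17) 0 = true := by
        change Nat.beq ((q / strd ax) % 17) 0 = true
        rw [hz]; rfl
      rw [if_pos e, if_pos ⟨hq, hz⟩]
    · have e : ¬ Nat.beq (Nat.mod (Nat.div q (strd ax)) 17) 0 = true := fun hb => hz (Nat.eq_of_beq_eq_true hb)
      rw [if_neg e, if_neg (fun h => hz h.2)]
  · rw [if_neg (fun h => hq h.1)]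
    have h1 : m0 ax < 2 ^ (64 * 4913) := by
      have := h.1
      exact Nat.le_of_ble_eq_true this
    exact dg_big _ _ _ h1 (by omega)

def stp (st c : ℕ) : ℕ := ((c + (c >>> (64 * st))) >>> 1) &&& keep
def row (st c : ℕ) : ℕ → ℕ
  | 0 => c
  | n + 1 => stp st (row st c n)
lemma land_full (a : ℕ) (h : a < 2 ^ 64) : a &&& (2 ^ 64 - 1) = a := by
  rw [Nat.and_two_pow_sub_one_eq_mod, Nat.mod_eq_of_lt h]
lemma stp_dg (st c q : ℕ) (h : ∀ q, dg c q < 2 ^ 63) :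
    dg (stp st c) q = if q < 4913 then (dg c q + dg c (q + st)) / 2 else 0 := by
  unfold stp
  rw [dg_land, dg_keep]
  split_ifs with hq
  · rw [dg_half, dg_add, dg_shr]
    intro q; rw [dg_shr]; have := h q; have := h (q + st); omega
  · exact Nat.and_zero _
lemma row_lt (b st c : ℕ) (hb : b ≤ 63) (h : ∀ q, dg c q < 2 ^ b) (n q : ℕ) : dg (row st c n) q < 2 ^ b := by
  induction n generalizing q with
  | zero => exact h q
  | succ n ih =>
    have h63 : (2:ℕ) ^ b ≤ 2 ^ 63 := Nat.pow_le_pow_right (by norm_num) hb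
    rw [row, stp_dg _ _ _ (fun q => lt_of_lt_of_le (ih q) h63)]
    split_ifs
    · have := ih q; have := ih (q + st); omega
    · positivity
lemma tl (ax : ℕ) (hax : ax < 3) (c m q : ℕ) (hm : m < 17) (hq : q < 4913) :
    dg ((c &&& m0 ax) <<< (64 * (strd ax * m))) q =
      if (q / strd ax) % 17 = m then dg c (q - strd ax * m) else 0 := by
  have hpos : 0 < strd ax := by interval_cases ax <;> simp [strd]
  rw [dg_shl, dg_land, dg_m0 ax hax]
  by_cases h1 : q < strd ax * m
  · have h2 : q / strd ax < m := (Nat.div_lt_iff_lt_mul hpos).2 (by rwa [mul_comm])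
    have h5 := Nat.mod_eq_of_lt (lt_trans h2 hm)
    rw [if_pos h1, if_neg (by rw [h5]; exact h2.ne)]
  · have h2 : (q - strd ax * m) / strd ax = q / strd ax - m := Nat.sub_mul_div _ _ _
    have h3 : m ≤ q / strd ax := (Nat.le_div_iff_mul_le hpos).2 (by rw [mul_comm]; omega)
    rw [if_neg h1, h2]
    by_cases h4 : (q / strd ax) % 17 = m
    · rw [if_pos (⟨by omega, by omega⟩ : q - strd ax * m < 4913 ∧ (q / strd ax - m) % 17 = 0), if_pos h4, land_full _ (dg_lt _ _)]
    · rw [if_neg (fun h => h4 (by have := h.2; omega)), if_neg h4, Nat.and_zero]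
lemma tr (ax : ℕ) (hax : ax < 3) (c m q : ℕ) (hm : m < 17) (hq : q < 4913) :
    dg (c &&& (m0 ax <<< (64 * (strd ax * m)))) q = if (q / strd ax) % 17 = m then dg c q else 0 := by
  have hpos : 0 < strd ax := by interval_cases ax <;> simp [strd]
  rw [dg_land, dg_shl, dg_m0 ax hax]
  by_cases h1 : q < strd ax * m
  · have h2 : q / strd ax < m := (Nat.div_lt_iff_lt_mul hpos).2 (by rwa [mul_comm])
    have h5 := Nat.mod_eq_of_lt (lt_trans h2 hm)
    rw [if_pos h1, if_neg (by rw [h5]; exact h2.ne), Nat.and_zero]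
  · have h2 : (q - strd ax * m) / strd ax = q / strd ax - m := Nat.sub_mul_div _ _ _
    have h3 : m ≤ q / strd ax := (Nat.le_div_iff_mul_le hpos).2 (by rw [mul_comm]; omega)
    rw [if_neg h1, h2]
    by_cases h4 : (q / strd ax) % 17 = m
    · rw [if_pos (⟨by omega, by omega⟩ : q - strd ax * m < 4913 ∧ (q / strd ax - m) % 17 = 0), if_pos h4, land_full _ (dg_lt _ _)]
    · rw [if_neg (fun h => h4 (by have := h.2; omega)), if_neg h4, Nat.and_zero]
lemma loop_spec (ax : ℕ) (hax : ax < 3) (b c0 : ℕ) (hb : b ≤ 63) (h : ∀ q, dg c0 q < 2 ^ b) (l : ℕ) :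
    ∀ n L R, l + n = 17 → (∀ q, dg L q < 2 ^ b) → (∀ q, dg R q < 2 ^ b) →
    ∃ L' R', (∀ k, loop (m0 ax) (64 * strd ax) l (row (strd ax) c0 n) (64 * (strd ax * n)) L R k = k L' R') ∧
      (∀ q, dg L' q < 2 ^ b) ∧ (∀ q, dg R' q < 2 ^ b) ∧
      (∀ q < 4913, dg L' q = if n ≤ (q / strd ax) % 17 then
        dg L q ||| dg (row (strd ax) c0 ((q / strd ax) % 17)) (q - strd ax * ((q / strd ax) % 17)) else dg L q) ∧
      (∀ q < 4913, dg R' q = if (q / strd ax) % 17 < l then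
        dg R q ||| dg (row (strd ax) c0 (16 - (q / strd ax) % 17)) q else dg R q) := by
  induction l with
  | zero =>
    intro n L R hn hL hR
    refine ⟨L, R, fun k => rfl, hL, hR, fun q _ => ?_, fun q _ => ?_⟩
    · rw [if_neg]; omega
    · rw [if_neg]; omega
  | succ l ih =>
    intro n L R hn hL hR
    have hrow := row_lt b (strd ax) c0 hb h n
    obtain ⟨L', R', h1, h2, h3, h4, h5⟩ := ih (n+1)
      (L ||| ((row (strd ax) c0 n &&& m0 ax) <<< (64 * (strd ax * n))))
      (R ||| (row (strd ax) c0 n &&& (m0 ax <<< (64 * (strd ax * l))))) (by omega)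
      (fun q => by
        rw [dg_lor, dg_shl, dg_land]
        refine Nat.or_lt_two_pow (hL q) ?_
        split_ifs
        · positivity
        · exact lt_of_le_of_lt Nat.and_le_left (hrow _))
      (fun q => by
        rw [dg_lor, dg_land]
        exact Nat.or_lt_two_pow (hR q) (lt_of_le_of_lt Nat.and_le_left (hrow _)))
    refine ⟨L', R', fun k => ?_, h2, h3, fun q hq => ?_, fun q hq => ?_⟩
    · rw [← h1 k]
      have e1 : 64 * (strd ax * (n + 1)) = Nat.add (64 * (strd ax * n)) (64 * strd ax) := by
        change _ = 64 * (strd ax * n) + 64 * strd ax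
        ring
      have e2 : 64 * (strd ax * l) = Nat.mul l (64 * strd ax) := by
        change _ = l * (64 * strd ax)
        ring
      rw [e1, e2]; rfl
    · rw [h4 q hq, dg_lor, tl ax hax _ _ _ (by omega) hq]
      generalize (q / strd ax) % 17 = i at *
      rcases lt_trichotomy n i with hlt | heq | hgt
      · rw [if_neg hlt.ne', if_pos (show n + 1 ≤ i from hlt), if_pos hlt.le, Nat.or_zero]
      · subst heq
        rw [if_pos rfl, if_neg (by omega), if_pos le_rfl]
      · rw [if_neg hgt.ne, if_neg (by omega), if_neg (by omega), Nat.or_zero]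
    · rw [h5 q hq, dg_lor, tr ax hax _ _ _ (by omega) hq]
      generalize (q / strd ax) % 17 = i at *
      rcases lt_trichotomy i l with hlt | heq | hgt
      · rw [if_neg hlt.ne, if_pos hlt, if_pos (by omega), Nat.or_zero]
      · subst heq
        rw [if_pos rfl, if_neg (by omega), if_pos (by omega), show 16 - i = n by omega]
      · rw [if_neg hgt.ne', if_neg (by omega), if_neg (by omega), Nat.or_zero]
lemma split_spec (ax : ℕ) (hax : ax < 3) (b c0 : ℕ) (hb : b ≤ 63) (h : ∀ q, dg c0 q < 2 ^ b) :
    ∃ L R d, (∀ k, split ax c0 k = k L R) ∧ (∀ q, dg L q < 2 ^ b) ∧ (∀ q, dg R q < 2 ^ b) ∧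
      d 0 = dg c0 ∧ Spl (strd ax) d (dg L) (dg R) := by
  obtain ⟨L, R, h1, h2, h3, h4, h5⟩ := loop_spec ax hax b c0 hb h 17 0 0 0 rfl
    (fun q => by rw [dg_zero]; positivity) (fun q => by rw [dg_zero]; positivity)
  refine ⟨L, R, fun n => dg (row (strd ax) c0 n), h1, h2, h3, rfl, ⟨fun n q hq => ?_, fun q hq => ?_, fun q hq => ?_⟩⟩
  · have h63 : (2:ℕ) ^ b ≤ 2 ^ 63 := Nat.pow_le_pow_right (by norm_num) hb
    rw [row, stp_dg _ _ _ (fun q => lt_of_lt_of_le (row_lt b _ c0 hb h n q) h63), if_pos hq]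
  · rw [h4 q hq, if_pos (Nat.zero_le _), dg_zero, Nat.zero_or]
  · rw [h5 q hq, if_pos (Nat.mod_lt _ (by norm_num)), dg_zero, Nat.zero_or]
end pack
end Kiss

namespace Kiss
section chks
noncomputable def px (a e : ℕ) (x : ℝ) : ℝ := ((a : ℝ) + x) / 2 ^ e
lemma px_l (a e : ℕ) (x : ℝ) : px (2 * a) (e + 1) x = px a e (x / 2) := by
  unfold px; push_cast; rw [pow_succ]; field_simp
lemma px_r (a e : ℕ) (x : ℝ) : px (2 * a + 1) (e + 1) x = px a e ((1 + x) / 2) := by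
  unfold px; push_cast; rw [pow_succ]; field_simp; ring
/-- `y` encodes a lower bound for `F - M`-shifted function on the box -/
def Low (F : ℝ → ℝ → ℝ → ℝ) (M : ℝ) (y au eu av ev az ez : ℕ) : Prop :=
  ∀ x y' z, up x → up y' → up z → E (fun q => (dg y q : ℝ)) x y' z - M ≤ F (px au eu x) (px av ev y') (px az ez z)
def Goal (G D : ℝ → ℝ → ℝ → ℝ) (au eu av ev az ez : ℕ) : Prop :=
  ∀ x y z, up x → up y → up z → (au = 0 ∨ 0 < x) → (av = 0 ∨ 0 < y) → (az = 0 ∨ 0 < z) →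
    px au eu x ≤ px av ev y → px av ev y ≤ px az ez z → D (px au eu x) (px av ev y) (px az ez z) ≤ 0 →
    0 ≤ G (px au eu x) (px av ev y) (px az ez z)
lemma up_half {x : ℝ} (h : up x) : up (x/2) ∧ up ((1+x)/2) := by
  obtain ⟨h0, h1⟩ := h
  exact ⟨⟨by linarith, by linarith⟩, ⟨by linarith, by linarith⟩⟩
lemma half_cases {x : ℝ} (h : up x) (a : ℕ) (ha : a = 0 ∨ 0 < x) :
    (∃ t, up t ∧ x = t / 2 ∧ (2 * a = 0 ∨ 0 < t)) ∨ (∃ t, up t ∧ x = (1 + t) / 2 ∧ (2 * a + 1 = 0 ∨ 0 < t)) := by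
  obtain ⟨h0, h1⟩ := h
  rcases le_or_gt x (1/2) with hx | hx
  · refine Or.inl ⟨2 * x, ⟨by linarith, by linarith⟩, by ring, ?_⟩
    rcases ha with rfl | ha
    · left; rfl
    · right; linarith
  · exact Or.inr ⟨2 * x - 1, ⟨by linarith, by linarith⟩, by ring, Or.inr (by linarith)⟩
lemma o_aux (a e a' e' : ℕ) (h : (a' + 1) * 2 ^ e ≤ a * 2 ^ e') (x y : ℝ) (hx : a = 0 ∨ 0 < x) (hy : up y)
    (hle : px a e x ≤ px a' e' y) : False := by
  have hx : 0 < x := by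
    rcases hx with rfl | hx
    · have : 0 < (a' + 1) * 2 ^ e := by positivity
      omega
    · exact hx
  have h' : ((a' : ℝ) + 1) * 2 ^ e ≤ a * 2 ^ e' := by exact_mod_cast h
  unfold px at hle
  have p1 : (0:ℝ) < 2 ^ e := by positivity
  have p2 : (0:ℝ) < 2 ^ e' := by positivity
  rw [div_le_div_iff₀ p1 p2] at hle
  have : 0 < x * 2 ^ e' := by positivity
  have : y * 2 ^ e ≤ 1 * 2 ^ e := mul_le_mul_of_nonneg_right hy.2 p1.le
  nlinarith
lemma low0 {F M y au eu av ev az ez L R d} (h : Low F M y au eu av ev az ez) (hd : d 0 = dg y)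
    (hs : Spl (strd 0) d (dg L) (dg R)) :
    Low F M L (2 * au) (eu + 1) av ev az ez ∧ Low F M R (2 * au + 1) (eu + 1) av ev az ez := by
  constructor <;> intro x y' z hx hy hz
  · rw [px_l]
    have h1 := (sp0 hs hx hy hz).1
    rw [hd] at h1
    have := h _ _ _ (up_half hx).1 hy hz
    linarith
  · rw [px_r]
    have h1 := (sp0 hs hx hy hz).2
    rw [hd] at h1
    have := h _ _ _ (up_half hx).2 hy hz
    linarith
lemma low1 {F M y au eu av ev az ez L R d} (h : Low F M y au eu av ev az ez) (hd : d 0 = dg y)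
    (hs : Spl (strd 1) d (dg L) (dg R)) :
    Low F M L au eu (2 * av) (ev + 1) az ez ∧ Low F M R au eu (2 * av + 1) (ev + 1) az ez := by
  constructor <;> intro x y' z hx hy hz
  · rw [px_l]
    have h1 := (sp1 hs hx hy hz).1
    rw [hd] at h1
    have := h _ _ _ hx (up_half hy).1 hz
    linarith
  · rw [px_r]
    have h1 := (sp1 hs hx hy hz).2
    rw [hd] at h1
    have := h _ _ _ hx (up_half hy).2 hz
    linarith
lemma low2 {F M y au eu av ev az ez L R d} (h : Low F M y au eu av ev az ez) (hd : d 0 = dg y)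
    (hs : Spl (strd 2) d (dg L) (dg R)) :
    Low F M L au eu av ev (2 * az) (ez + 1) ∧ Low F M R au eu av ev (2 * az + 1) (ez + 1) := by
  constructor <;> intro x y' z hx hy hz
  · rw [px_l]
    have h1 := (sp2 hs hx hy hz).1
    rw [hd] at h1
    have := h _ _ _ hx hy (up_half hz).1
    linarith
  · rw [px_r]
    have h1 := (sp2 hs hx hy hz).2
    rw [hd] at h1
    have := h _ _ _ hx hy (up_half hz).2
    linarith
lemma bit_ge (a n : ℕ) (h : a &&& 2 ^ n = 2 ^ n) : 2 ^ n ≤ a := by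
  rw [← h]; exact Nat.and_le_left
theorem chk_sound (G D : ℝ → ℝ → ℝ → ℝ) (t : Tr) : ∀ g d au eu av ev az ez,
    (∀ q, dg g q < 2 ^ 63) → (∀ q, dg d q < 2 ^ 34) →
    Low G (2 ^ 62) g au eu av ev az ez → Low D (2 ^ 33) d au eu av ev az ez →
    chk t g d au eu av ev az ez = true → Goal G D au eu av ev az ez := by
  induction t with
  | l =>
    intro g d au eu av ev az ez hg hd lg ld h x y z hx hy hz _ _ _ _ _ _
    have h : g &&& hi62 = hi62 := Nat.eq_of_beq_eq_true h
    refine le_trans ?_ (lg x y z hx hy hz)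
    have := E_mono (c := fun _ => (2:ℝ)^62) (d := fun q => (dg g q : ℝ)) hx.1 hx.2 hy.1 hy.2 hz.1 hz.2 (by
      intro q hq
      have h1 := dg_land g hi62 q
      have h2 : dg hi62 q = 2 ^ 62 := by
        change dg (onesP * 2 ^ 62) q = _
        rw [dg_onesMul _ _ (by norm_num), if_pos hq]
      rw [h, h2] at h1
      have := bit_ge _ _ h1.symm
      exact_mod_cast this)
    rw [E_const] at this
    linarith
  | o =>
    intro g d au eu av ev az ez hg hd lg ld h x y z hx hy hz hx0 hy0 hz0 h1 h2 _
    exfalso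
    have h := Bool.or_eq_true _ _ ▸ h
    rcases h with h | h
    · exact o_aux au eu av ev (Nat.le_of_ble_eq_true h) x y hx0 hy h1
    · exact o_aux av ev az ez (Nat.le_of_ble_eq_true h) y z hy0 hz h2
  | m s =>
    intro g d au eu av ev az ez hg hd lg ld h x y z hx hy hz hx0 hy0 hz0 h1 h2 h3
    have h : lfM s g d = true := h
    unfold lfM at h
    rw [Bool.and_eq_true] at h
    have hs : s * 2 ^ 33 ≤ 2 ^ 61 := Nat.le_of_ble_eq_true h.1
    have hm : (g + s * d + onesP * (2 ^ 62 - s * 2 ^ 33)) &&& hi63 = hi63 := Nat.eq_of_beq_eq_true h.2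
    have b1 : ∀ q, s * dg d q ≤ 2 ^ 62 := by
      intro q
      have := Nat.mul_le_mul_left s (hd q).le
      omega
    have d1 : ∀ q, dg (s * d) q = s * dg d q := dg_mul s d (fun q => lt_of_le_of_lt (b1 q) (by norm_num))
    have d2 : ∀ q, dg (g + s * d) q = dg g q + s * dg d q := by
      intro q
      rw [dg_add, d1]
      intro q; rw [d1]; have := hg q; have := b1 q; omega
    have d3 : ∀ q < 4913, dg (g + s * d + onesP * (2 ^ 62 - s * 2 ^ 33)) q = dg g q + s * dg d q + (2 ^ 62 - s * 2 ^ 33) := by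
      intro q hq
      rw [dg_add, d2, dg_onesMul _ _ (by omega), if_pos hq]
      intro q
      rw [d2, dg_onesMul _ _ (by omega)]
      have := hg q; have := b1 q
      split_ifs <;> omega
    have := E_mono (c := fun _ => (2:ℝ)^62 + s * 2 ^ 33) (d := fun q => (dg g q : ℝ) + s * dg d q) hx.1 hx.2 hy.1 hy.2 hz.1 hz.2 (by
      intro q hq
      have h1 := dg_land (g + s * d + onesP * (2 ^ 62 - s * 2 ^ 33)) hi63 q
      have h2 : dg hi63 q = 2 ^ 63 := by
        change dg (onesP * 2 ^ 63) q = _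
        rw [dg_onesMul _ _ (by norm_num), if_pos hq]
      rw [hm, h2, d3 q hq] at h1
      have := bit_ge _ _ h1.symm
      have : 2 ^ 62 + s * 2 ^ 33 ≤ dg g q + s * dg d q := by omega
      exact_mod_cast this)
    rw [E_const, E_add, E_smul] at this
    have e1 := lg x y z hx hy hz
    have e2 := ld x y z hx hy hz
    have s0 : (0:ℝ) ≤ s := Nat.cast_nonneg s
    have e3 := mul_le_mul_of_nonneg_left e2 s0
    have e4 := mul_le_mul_of_nonneg_left h3 s0
    linarith
  | a t1 t2 ih1 ih2 =>
    intro g d au eu av ev az ez hg hd lg ld h x y z hx hy hz hx0 hy0 hz0 h1 h2 h3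
    obtain ⟨L, R, r, k1, k2, k3, k4, k5⟩ := split_spec 0 (by norm_num) 63 g (by norm_num) hg
    obtain ⟨L', R', r', k1', k2', k3', k4', k5'⟩ := split_spec 0 (by norm_num) 34 d (by norm_num) hd
    rw [chk, k1, k1', Bool.and_eq_true] at h
    obtain ⟨lg1, lg2⟩ := low0 lg k4 k5
    obtain ⟨ld1, ld2⟩ := low0 ld k4' k5'
    rcases half_cases hx au hx0 with ⟨t, ht, rfl, ht0⟩ | ⟨t, ht, rfl, ht0⟩
    · have := ih1 _ _ _ _ _ _ _ _ k2 k2' lg1 ld1 h.1 t y z ht hy hz ht0 hy0 hz0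
      rw [px_l] at this; exact this h1 h2 h3
    · have := ih2 _ _ _ _ _ _ _ _ k3 k3' lg2 ld2 h.2 t y z ht hy hz ht0 hy0 hz0
      rw [px_r] at this; exact this h1 h2 h3
  | b t1 t2 ih1 ih2 =>
    intro g d au eu av ev az ez hg hd lg ld h x y z hx hy hz hx0 hy0 hz0 h1 h2 h3
    obtain ⟨L, R, r, k1, k2, k3, k4, k5⟩ := split_spec 1 (by norm_num) 63 g (by norm_num) hg
    obtain ⟨L', R', r', k1', k2', k3', k4', k5'⟩ := split_spec 1 (by norm_num) 34 d (by norm_num) hd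
    rw [chk, k1, k1', Bool.and_eq_true] at h
    obtain ⟨lg1, lg2⟩ := low1 lg k4 k5
    obtain ⟨ld1, ld2⟩ := low1 ld k4' k5'
    rcases half_cases hy av hy0 with ⟨t, ht, rfl, ht0⟩ | ⟨t, ht, rfl, ht0⟩
    · have := ih1 _ _ _ _ _ _ _ _ k2 k2' lg1 ld1 h.1 x t z hx ht hz hx0 ht0 hz0
      rw [px_l] at this; exact this h1 h2 h3
    · have := ih2 _ _ _ _ _ _ _ _ k3 k3' lg2 ld2 h.2 x t z hx ht hz hx0 ht0 hz0
      rw [px_r] at this; exact this h1 h2 h3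
  | c t1 t2 ih1 ih2 =>
    intro g d au eu av ev az ez hg hd lg ld h x y z hx hy hz hx0 hy0 hz0 h1 h2 h3
    obtain ⟨L, R, r, k1, k2, k3, k4, k5⟩ := split_spec 2 (by norm_num) 63 g (by norm_num) hg
    obtain ⟨L', R', r', k1', k2', k3', k4', k5'⟩ := split_spec 2 (by norm_num) 34 d (by norm_num) hd
    rw [chk, k1, k1', Bool.and_eq_true] at h
    obtain ⟨lg1, lg2⟩ := low2 lg k4 k5
    obtain ⟨ld1, ld2⟩ := low2 ld k4' k5'
    rcases half_cases hz az hz0 with ⟨t, ht, rfl, ht0⟩ | ⟨t, ht, rfl, ht0⟩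
    · have := ih1 _ _ _ _ _ _ _ _ k2 k2' lg1 ld1 h.1 x y t hx hy ht hx0 hy0 ht0
      rw [px_l] at this; exact this h1 h2 h3
    · have := ih2 _ _ _ _ _ _ _ _ k3 k3' lg2 ld2 h.2 x y t hx hy ht hx0 hy0 ht0
      rw [px_r] at this; exact this h1 h2 h3
end chks
end Kiss

namespace Kiss
section poly
inductive Bd {R : Type} [CommRing R] (X1 Y1 X2 Y2 X3 Y3 : R) : ℕ → ℕ → ℕ → R → ℕ → Prop
  | zero (d e f A) : Bd X1 Y1 X2 Y2 X3 Y3 d e f 0 A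
  | add (d e f i j k : ℕ) (n : ℤ) (p : R) (A A' : ℕ) : i ≤ d → j ≤ e → k ≤ f → n.natAbs + A ≤ A' →
      Bd X1 Y1 X2 Y2 X3 Y3 d e f p A →
      Bd X1 Y1 X2 Y2 X3 Y3 d e f ((n : R) * (X1 ^ i * Y1 ^ (d - i) * (X2 ^ j * Y2 ^ (e - j)) * (X3 ^ k * Y3 ^ (f - k))) + p) A'
section
variable {R : Type} [CommRing R] {X1 Y1 X2 Y2 X3 Y3 : R} {d e f d' e' f' A B : ℕ} {p q : R}
local notation "𝔅" => Bd X1 Y1 X2 Y2 X3 Y3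
lemma Bd.mono (h : 𝔅 d e f p A) {B : ℕ} (hB : A ≤ B) : 𝔅 d e f p B := by
  induction h generalizing B with
  | zero => exact .zero _ _ _ _
  | add i j k n p A A' h1 h2 h3 h4 h5 ih =>
    exact .add _ _ _ _ _ _ _ _ A _ h1 h2 h3 (by omega) h5
lemma Bd.plus (h : 𝔅 d e f p A) (h' : 𝔅 d e f q B) : 𝔅 d e f (p + q) (A + B) := by
  induction h generalizing B with
  | zero => rw [zero_add]; exact h'.mono (by omega)
  | add i j k n p A A' h1 h2 h3 h4 h5 ih =>
    rw [add_assoc]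
    exact .add _ _ _ _ _ _ _ _ (A + B) _ h1 h2 h3 (by omega) (ih h')
lemma Bd.mon (n : ℤ) (i j k : ℕ) (h1 : i ≤ d) (h2 : j ≤ e) (h3 : k ≤ f) :
    𝔅 d e f ((n : R) * (X1 ^ i * Y1 ^ (d - i) * (X2 ^ j * Y2 ^ (e - j)) * (X3 ^ k * Y3 ^ (f - k)))) n.natAbs := by
  have := Bd.add (X1 := X1) (Y1 := Y1) (X2 := X2) (Y2 := Y2) (X3 := X3) (Y3 := Y3) d e f i j k n 0 0 n.natAbs h1 h2 h3 (by omega) (.zero _ _ _ _)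
  rwa [add_zero] at this
lemma Bd.monMul (n : ℤ) (i j k : ℕ) (h1 : i ≤ d) (h2 : j ≤ e) (h3 : k ≤ f) (h : 𝔅 d' e' f' q B) :
    𝔅 (d + d') (e + e') (f + f') ((n : R) * (X1 ^ i * Y1 ^ (d - i) * (X2 ^ j * Y2 ^ (e - j)) * (X3 ^ k * Y3 ^ (f - k))) * q) (n.natAbs * B) := by
  induction h with
  | zero => rw [mul_zero]; exact .zero _ _ _ _
  | add i' j' k' n' p A A' h1' h2' h3' h4' h5' ih =>
    have := Bd.add _ _ _ (i + i') (j + j') (k + k') (n * n') _ _ (n.natAbs * A') (by omega) (by omega) (by omega) (by rw [Int.natAbs_mul]; rw [← mul_add]; exact Nat.mul_le_mul_left _ h4') ih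
    convert this using 1
    rw [show d + d' - (i + i') = (d - i) + (d' - i') by omega, show e + e' - (j + j') = (e - j) + (e' - j') by omega,
      show f + f' - (k + k') = (f - k) + (f' - k') by omega]
    push_cast
    ring
lemma Bd.mul (h : 𝔅 d e f p A) (h' : 𝔅 d' e' f' q B) : 𝔅 (d + d') (e + e') (f + f') (p * q) (A * B) := by
  induction h with
  | zero => rw [zero_mul]; exact .zero _ _ _ _
  | add i j k n p A A' h1 h2 h3 h4 h5 ih =>
    rw [add_mul]
    exact ((Bd.monMul n i j k h1 h2 h3 h').plus ih).mono (by nlinarith)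
lemma Bd.int (n : ℤ) : 𝔅 0 0 0 (n : R) n.natAbs := by
  simpa using Bd.mon (X1 := X1) (Y1 := Y1) (X2 := X2) (Y2 := Y2) (X3 := X3) (Y3 := Y3) n 0 0 0 (le_refl 0) (le_refl 0) (le_refl 0)
lemma Bd.smul (n : ℤ) (h : 𝔅 d e f p A) : 𝔅 d e f ((n : R) * p) (n.natAbs * A) := by
  simpa using (Bd.int n).mul h
lemma Bd.one : 𝔅 0 0 0 (1 : R) 1 := by simpa using Bd.int (X1 := X1) (Y1 := Y1) (X2 := X2) (Y2 := Y2) (X3 := X3) (Y3 := Y3) 1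
lemma Bd.pow (h : 𝔅 d e f p A) (n : ℕ) : 𝔅 (n * d) (n * e) (n * f) (p ^ n) (A ^ n) := by
  induction n with
  | zero => simpa using Bd.one
  | succ n ih => simpa only [pow_succ, add_mul, one_mul] using ih.mul h
lemma Bd.sub (h : 𝔅 d e f p A) (h' : 𝔅 d e f q B) : 𝔅 d e f (p - q) (A + B) := by
  have := h.plus (Bd.smul (-1) h')
  simpa [sub_eq_add_neg] using this
lemma Bd.x1 : 𝔅 1 0 0 X1 1 := by simpa using Bd.mon (X1 := X1) (Y1 := Y1) (X2 := X2) (Y2 := Y2) (X3 := X3) (Y3 := Y3) (d := 1) 1 1 0 0 (le_refl 1) (le_refl 0) (le_refl 0)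
lemma Bd.y1 : 𝔅 1 0 0 Y1 1 := by simpa using Bd.mon (X1 := X1) (Y1 := Y1) (X2 := X2) (Y2 := Y2) (X3 := X3) (Y3 := Y3) (d := 1) 1 0 0 0 (Nat.zero_le 1) (le_refl 0) (le_refl 0)
end
lemma Bd.rot {R : Type} [CommRing R] {X1 Y1 X2 Y2 X3 Y3 : R} {d e f A : ℕ} {p : R}
    (h : Bd X1 Y1 X2 Y2 X3 Y3 d e f p A) : Bd X3 Y3 X1 Y1 X2 Y2 f d e p A := by
  induction h with
  | zero => exact .zero _ _ _ _
  | add i j k n p A A' h1 h2 h3 h4 h5 ih =>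
    convert Bd.add _ _ _ k i j n p A A' h3 h1 h2 h4 ih using 2
    ring
lemma Bd.cast {R : Type} [CommRing R] {X1 Y1 X2 Y2 X3 Y3 : R} {d e f A d' e' f' B : ℕ} {p : R}
    (h : Bd X1 Y1 X2 Y2 X3 Y3 d e f p A) (h1 : d = d') (h2 : e = e') (h3 : f = f') (h4 : A ≤ B) :
    Bd X1 Y1 X2 Y2 X3 Y3 d' e' f' p B := by subst h1 h2 h3; exact h.mono h4
lemma Bd.ex {R : Type} [CommRing R] {X1 Y1 X2 Y2 X3 Y3 : R} {d e f A : ℕ} {p : R}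
    (h : Bd X1 Y1 X2 Y2 X3 Y3 d e f p A) : ∃ t : ℕ → ℕ → ℕ → ℤ, (∀ i j k, (t i j k).natAbs ≤ A) ∧
      p = ∑ i ∈ Finset.range (d + 1), ∑ j ∈ Finset.range (e + 1), ∑ k ∈ Finset.range (f + 1), (t i j k : R) * (X1 ^ i * Y1 ^ (d - i) * (X2 ^ j * Y2 ^ (e - j)) * (X3 ^ k * Y3 ^ (f - k))) := by
  induction h with
  | zero => exact ⟨fun _ _ _ => 0, by simp, by simp⟩
  | add i j k n p A A' h1 h2 h3 h4 h5 ih =>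
    obtain ⟨t, ht, hp⟩ := ih
    refine ⟨fun i' j' k' => (if i' = i then if j' = j then if k' = k then n else 0 else 0 else 0) + t i' j' k', ?_, ?_⟩
    · intro i' j' k'
      have := ht i' j' k'
      dsimp only
      split_ifs <;> omega
    · simp only [Int.cast_add, add_mul, Finset.sum_add_distrib, ← hp]
      congr 1
      rw [Finset.sum_eq_single i, Finset.sum_eq_single j, Finset.sum_eq_single k]
      · simp
      · intro b _ hb; simp [hb]
      · intro hb; simp at hb; omega
      · intro b _ hb; simp [hb]
      · intro hb; simp at hb; omega
      · intro b _ hb; simp [hb]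
      · intro hb; simp at hb; omega

/-! homogeneous forms -/
def krH {R : Type} [CommRing R] (X Y : R) : List ℤ → R
  | [] => 0
  | c :: l => (c : R) * Y ^ l.length + X * krH X Y l
def dotH {R : Type} [CommRing R] (X1 Y1 X2 Y2 : R) : List (List ℤ) → R
  | [] => 0
  | f :: fs => krH X1 Y1 f * krH X2 Y2 f + dotH X1 Y1 X2 Y2 fs
def FH {R : Type} [CommRing R] (k : ℕ) (X1 Y1 X2 Y2 : R) : R := dotH X1 Y1 X2 Y2 (cF.getD k [])
def E3H {R : Type} [CommRing R] (X1 Y1 X2 Y2 X3 Y3 : R) : R :=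
  EE (FH 0 X1 Y1 X2 Y2) (FH 1 X1 Y1 X2 Y2) (FH 2 X1 Y1 X2 Y2) (FH 3 X1 Y1 X2 Y2) (FH 4 X1 Y1 X2 Y2) (FH 5 X1 Y1 X2 Y2) (FH 6 X1 Y1 X2 Y2)
    (2 * (X3 - 2 * Y3) * (Y1 + X1) * (Y2 + X2) - (X1 - 2 * Y1) * (X2 - 2 * Y2) * (Y3 + X3))
    ((12 * (X1 * Y1) + 3 * X1 ^ 2) * (12 * (X2 * Y2) + 3 * X2 ^ 2) * (Y3 + X3) ^ 2) (Y3 + X3)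
def ESH {R : Type} [CommRing R] (X1 Y1 X2 Y2 X3 Y3 : R) : R :=
  E3H X1 Y1 X2 Y2 X3 Y3 + E3H X2 Y2 X3 Y3 X1 Y1 + E3H X3 Y3 X1 Y1 X2 Y2
lemma krH_one {R : Type} [CommRing R] (a : R) (l : List ℤ) : krH a 1 l = kr a l := by
  induction l with
  | nil => rfl
  | cons c l ih => simp [krH, kr, ih]
lemma dotH_one {R : Type} [CommRing R] (a b : R) (l : List (List ℤ)) : dotH a 1 b 1 l = dotF a b l := by
  induction l with
  | nil => rfl
  | cons c l ih => simp [dotH, dotF, ih, krH_one]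
lemma ESH_one {R : Type} [CommRing R] (a b c : R) : ESH a 1 b 1 c 1 = ES a b c := by
  unfold ESH ES E3H E3 FH FF
  simp only [dotH_one, mul_one]
lemma map_krH {R S : Type} [CommRing R] [CommRing S] (φ : R →+* S) (X Y : R) (l : List ℤ) :
    φ (krH X Y l) = krH (φ X) (φ Y) l := by
  induction l with
  | nil => simp [krH]
  | cons c l ih => simp [krH, ih]
lemma map_dotH {R S : Type} [CommRing R] [CommRing S] (φ : R →+* S) (X1 Y1 X2 Y2 : R) (l : List (List ℤ)) :
    φ (dotH X1 Y1 X2 Y2 l) = dotH (φ X1) (φ Y1) (φ X2) (φ Y2) l := by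
  induction l with
  | nil => simp [dotH]
  | cons c l ih => simp [dotH, ih, map_krH]
lemma map_E3H {R S : Type} [CommRing R] [CommRing S] (φ : R →+* S) (X1 Y1 X2 Y2 X3 Y3 : R) :
    φ (E3H X1 Y1 X2 Y2 X3 Y3) = E3H (φ X1) (φ Y1) (φ X2) (φ Y2) (φ X3) (φ Y3) := by
  simp only [E3H, EE, FH, map_add, map_sub, map_mul, map_pow, map_ofNat, map_dotH]
lemma map_ESH {R S : Type} [CommRing R] [CommRing S] (φ : R →+* S) (X1 Y1 X2 Y2 X3 Y3 : R) :
    φ (ESH X1 Y1 X2 Y2 X3 Y3) = ESH (φ X1) (φ Y1) (φ X2) (φ Y2) (φ X3) (φ Y3) := by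
  simp only [ESH, map_add, map_E3H]
end poly
end Kiss

namespace Kiss
section root
def lenOK (k : ℕ) : Bool := and (Nat.ble (cF.getD k []).length 64)
  ((cF.getD k []).all fun f => and (Nat.beq f.length (17 - k)) (Nat.ble (f.map Int.natAbs).sum (2 ^ 50)))
lemma lenOK_all : ∀ k < 7, lenOK k = true := by decide +kernel
lemma krH_Bd {R : Type} [CommRing R] {X1 Y1 X2 Y2 X3 Y3 : R} (l : List ℤ) (n : ℕ) (hl : l.length = n + 1) :
    Bd X1 Y1 X2 Y2 X3 Y3 n 0 0 (krH X1 Y1 l) (l.map Int.natAbs).sum := by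
  induction l generalizing n with
  | nil => simp at hl
  | cons c l ih =>
    rw [krH, List.map_cons, List.sum_cons]
    have hn : l.length = n := by simpa using hl
    rw [hn]
    have h1 : Bd X1 Y1 X2 Y2 X3 Y3 n 0 0 ((c : R) * Y1 ^ n) c.natAbs := by
      simpa using (Bd.smul c (Bd.y1.pow n) : Bd X1 Y1 X2 Y2 X3 Y3 _ _ _ _ _)
    refine h1.plus ?_
    cases n with
    | zero => rw [List.length_eq_zero_iff] at hn; subst hn; simp only [krH, mul_zero]; exact .zero _ _ _ _
    | succ n => exact (Bd.x1.mul (ih n hn)).cast (by omega) (by omega) (by omega) (by omega)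
lemma dotH_Bd {R : Type} [CommRing R] {X1 Y1 X2 Y2 X3 Y3 : R} (l : List (List ℤ)) (n : ℕ)
    (hl : ∀ f ∈ l, f.length = n + 1 ∧ (f.map Int.natAbs).sum ≤ 2 ^ 50) :
    Bd X1 Y1 X2 Y2 X3 Y3 n n 0 (dotH X1 Y1 X2 Y2 l) (l.length * 2 ^ 100) := by
  induction l with
  | nil => exact .zero _ _ _ _
  | cons f l ih =>
    rw [dotH]
    have h1 := ih fun g hg => hl g (List.mem_cons_of_mem _ hg)
    obtain ⟨h2, h3⟩ := hl f List.mem_cons_self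
    have h4 : Bd X1 Y1 X2 Y2 X3 Y3 n 0 0 (krH X1 Y1 f) (2 ^ 50) := (krH_Bd f n h2).mono h3
    have h5 : Bd X1 Y1 X2 Y2 X3 Y3 0 n 0 (krH X2 Y2 f) (2 ^ 50) := ((krH_Bd f n h2).mono h3).rot
    refine ((h4.mul h5).plus (h1.cast (by omega) (by omega) (by omega) le_rfl)).cast (by omega) (by omega) (by omega) ?_
    rw [List.length_cons]; omega
lemma FH_Bd {R : Type} [CommRing R] {X1 Y1 X2 Y2 X3 Y3 : R} (k : ℕ) (hk : k < 7) :
    Bd X1 Y1 X2 Y2 X3 Y3 (16 - k) (16 - k) 0 (FH k X1 Y1 X2 Y2) (2 ^ 106) := by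
  have h := lenOK_all k hk
  unfold lenOK at h
  rw [Bool.and_eq_true, List.all_eq_true] at h
  refine (dotH_Bd _ _ fun f hf => ?_).mono ?_
  · have := h.2 f hf
    rw [Bool.and_eq_true] at this
    have h1 := Nat.eq_of_beq_eq_true this.1
    exact ⟨by omega, Nat.le_of_ble_eq_true this.2⟩
  · have := Nat.le_of_ble_eq_true h.1
    omega
lemma E3H_Bd {R : Type} [CommRing R] {X1 Y1 X2 Y2 X3 Y3 : R} :
    Bd X1 Y1 X2 Y2 X3 Y3 16 16 16 (E3H X1 Y1 X2 Y2 X3 Y3) (2 ^ 200) := by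
  have x1 : Bd X1 Y1 X2 Y2 X3 Y3 1 0 0 X1 1 := .x1
  have y1 : Bd X1 Y1 X2 Y2 X3 Y3 1 0 0 Y1 1 := .y1
  have x2 : Bd X1 Y1 X2 Y2 X3 Y3 0 1 0 X2 1 := Bd.x1.rot
  have y2 : Bd X1 Y1 X2 Y2 X3 Y3 0 1 0 Y2 1 := Bd.y1.rot
  have x3 : Bd X1 Y1 X2 Y2 X3 Y3 0 0 1 X3 1 := Bd.x1.rot.rot
  have y3 : Bd X1 Y1 X2 Y2 X3 Y3 0 0 1 Y3 1 := Bd.y1.rot.rot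
  have hs : Bd X1 Y1 X2 Y2 X3 Y3 1 1 1 (2 * (X3 - 2 * Y3) * (Y1 + X1) * (Y2 + X2) - (X1 - 2 * Y1) * (X2 - 2 * Y2) * (Y3 + X3)) 64 := by
    have := (((Bd.smul 2 (x3.sub (Bd.smul 2 y3))).mul (y1.plus x1)).mul (y2.plus x2)).sub
      (((x1.sub (Bd.smul 2 y1)).mul (x2.sub (Bd.smul 2 y2))).mul (y3.plus x3))
    push_cast at this
    exact this.mono (by decide)
  have hw : Bd X1 Y1 X2 Y2 X3 Y3 2 2 2 ((12 * (X1 * Y1) + 3 * X1 ^ 2) * (12 * (X2 * Y2) + 3 * X2 ^ 2) * (Y3 + X3) ^ 2) 1024 := by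
    have := (((Bd.smul 12 (x1.mul y1)).plus (Bd.smul 3 (x1.pow 2))).mul
       ((Bd.smul 12 (x2.mul y2)).plus (Bd.smul 3 (x2.pow 2)))).mul ((y3.plus x3).pow 2)
    push_cast at this
    exact this.mono (by decide)
  have ho : Bd X1 Y1 X2 Y2 X3 Y3 0 0 1 (Y3 + X3) 2 := y3.plus x3
  have F0 := FH_Bd (X1 := X1) (Y1 := Y1) (X2 := X2) (Y2 := Y2) (X3 := X3) (Y3 := Y3) 0 (by omega)
  have F1 := FH_Bd (X1 := X1) (Y1 := Y1) (X2 := X2) (Y2 := Y2) (X3 := X3) (Y3 := Y3) 1 (by omega)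
  have F2 := FH_Bd (X1 := X1) (Y1 := Y1) (X2 := X2) (Y2 := Y2) (X3 := X3) (Y3 := Y3) 2 (by omega)
  have F3 := FH_Bd (X1 := X1) (Y1 := Y1) (X2 := X2) (Y2 := Y2) (X3 := X3) (Y3 := Y3) 3 (by omega)
  have F4 := FH_Bd (X1 := X1) (Y1 := Y1) (X2 := X2) (Y2 := Y2) (X3 := X3) (Y3 := Y3) 4 (by omega)
  have F5 := FH_Bd (X1 := X1) (Y1 := Y1) (X2 := X2) (Y2 := Y2) (X3 := X3) (Y3 := Y3) 5 (by omega)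
  have F6 := FH_Bd (X1 := X1) (Y1 := Y1) (X2 := X2) (Y2 := Y2) (X3 := X3) (Y3 := Y3) 6 (by omega)
  unfold E3H EE
  generalize (2 * (X3 - 2 * Y3) * (Y1 + X1) * (Y2 + X2) - (X1 - 2 * Y1) * (X2 - 2 * Y2) * (Y3 + X3)) = s at *
  generalize ((12 * (X1 * Y1) + 3 * X1 ^ 2) * (12 * (X2 * Y2) + 3 * X2 ^ 2) * (Y3 + X3) ^ 2) = w at *
  generalize Y3 + X3 = o at *
  have t0 := (Bd.smul 4096 F0).mul (ho.pow 16)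
  have t1 := ((Bd.smul 1024 hs).mul F1).mul (ho.pow 15)
  have t2 := ((Bd.smul 256 ((Bd.smul 11 (hs.pow 2)).sub hw)).mul F2).mul (ho.pow 14)
  have t3 := ((Bd.smul 64 ((Bd.smul 13 (hs.pow 3)).sub ((Bd.smul 3 hs).mul hw))).mul F3).mul (ho.pow 13)
  have t4 := ((Bd.smul 16 (((Bd.smul 65 (hs.pow 4)).sub ((Bd.smul 26 (hs.pow 2)).mul hw)).plus (hw.pow 2))).mul F4).mul (ho.pow 12)
  have t5 := ((Bd.smul 4 (((Bd.smul 17 (hs.pow 5)).sub ((Bd.smul 10 (hs.pow 3)).mul hw)).plus (hs.mul (hw.pow 2)))).mul F5).mul (ho.pow 11)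
  have t6 := (((((Bd.smul 323 (hs.pow 6)).sub ((Bd.smul 255 (hs.pow 4)).mul hw)).plus ((Bd.smul 45 (hs.pow 2)).mul (hw.pow 2))).sub (hw.pow 3)).mul F6).mul (ho.pow 10)
  have := (((((t0.plus t1).plus t2).plus t3).plus t4).plus t5).plus t6
  push_cast at this
  exact this.mono (by decide)
lemma ESH_Bd {R : Type} [CommRing R] {X1 Y1 X2 Y2 X3 Y3 : R} :
    Bd X1 Y1 X2 Y2 X3 Y3 16 16 16 (ESH X1 Y1 X2 Y2 X3 Y3) (2 ^ 253) :=
  ((E3H_Bd.plus E3H_Bd.rot).plus E3H_Bd.rot.rot).mono (by decide)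

lemma pk_sum (s : ℕ) (f : ℕ → ℕ) (n : ℕ) (h : ∀ i < n, f i < 2 ^ s) :
    pk s f n = ∑ i ∈ Finset.range n, f i * 2 ^ (s * i) := by
  induction n with
  | zero => rfl
  | succ n ih =>
    have h1 := pk_lt s f n fun i hi => h i (by omega)
    rw [Finset.sum_range_succ, ← ih fun i hi => h i (by omega)]
    change pk s f n ||| (f n <<< (s * n)) = _
    rw [Nat.lor_comm, ← Nat.shiftLeft_add_eq_or_of_lt h1, Nat.shiftLeft_eq, add_comm]
lemma pk3_sum (w : ℕ) (f : ℕ → ℕ → ℕ → ℕ) (h : ∀ i < 17, ∀ j < 17, ∀ k < 17, f i j k < 2 ^ w) :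
    pk3 w f = ∑ i ∈ Finset.range 17, ∑ j ∈ Finset.range 17, ∑ k ∈ Finset.range 17, f i j k * ((2 ^ (w * 289)) ^ i * (2 ^ (w * 17)) ^ j * (2 ^ w) ^ k) := by
  have h1 : ∀ i < 17, ∀ j < 17, pk w (fun k => f i j k) 17 < 2 ^ (w * 17) := fun i hi j hj => pk_lt w _ 17 (h i hi j hj)
  have h2 : ∀ i < 17, pk (w * 17) (fun j => pk w (fun k => f i j k) 17) 17 < 2 ^ (w * 289) := by
    intro i hi
    have := pk_lt (w * 17) (fun j => pk w (fun k => f i j k) 17) 17 (h1 i hi)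
    rw [show w * 17 * 17 = w * 289 by ring] at this; exact this
  rw [pk3, pk_sum _ _ _ h2]
  refine Finset.sum_congr rfl fun i hi => ?_
  rw [pk_sum _ _ _ (h1 i (Finset.mem_range.1 hi)), Finset.sum_mul]
  refine Finset.sum_congr rfl fun j hj => ?_
  rw [pk_sum _ _ _ (h i (Finset.mem_range.1 hi) j (Finset.mem_range.1 hj)), Finset.sum_mul, Finset.sum_mul]
  refine Finset.sum_congr rfl fun k hk => ?_
  rw [pow_mul _ (w * 289) i, pow_mul _ (w * 17) j, pow_mul _ w k]; ring
end root
end Kiss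

namespace Kiss
section root2
lemma kron (w M : ℕ) (t : ℕ → ℕ → ℕ → ℤ) (h : ∀ i j k, (t i j k).natAbs ≤ M) (hw : 2 * M < 2 ^ w) (hM : M < 2 ^ w) :
    (∑ i ∈ Finset.range 17, ∑ j ∈ Finset.range 17, ∑ k ∈ Finset.range 17,
      t i j k * (((2:ℤ) ^ (w * 289)) ^ i * ((2:ℤ) ^ (w * 17)) ^ j * ((2:ℤ) ^ w) ^ k) + ((pk3 w fun _ _ _ => M : ℕ) : ℤ)).toNat
    = pk3 w fun i j k => (t i j k + M).toNat := by
  have e : ∀ i j k, (((t i j k + M).toNat : ℕ) : ℤ) = t i j k + M := by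
    intro i j k; have := h i j k; omega
  have l : ∀ i j k, (t i j k + M).toNat < 2 ^ w := by
    intro i j k; have := h i j k; omega
  rw [← Int.toNat_natCast (pk3 w fun i j k => (t i j k + M).toNat)]
  congr 1
  rw [pk3_sum w _ fun i _ j _ k _ => l i j k, pk3_sum w _ fun i _ j _ k _ => hM]
  push_cast [e]
  simp only [← Finset.sum_add_distrib, ← add_mul]
lemma dP_eq (y i j k : ℕ) (hi : i < 17) (hj : j < 17) (hk : k < 17) :
    dgW 256 (dgW (256 * 17) (dgW (256 * 289) y i) j) k = y / 2 ^ (256 * (289 * i + 17 * j + k)) % 2 ^ 256 := by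
  rw [← nest 256 y i j k hi hj hk]
  have hd : ∀ w y q, dgW w y q = y / 2 ^ (w * q) % 2 ^ w := fun w y q => by
    rw [← Nat.shiftRight_eq_div_pow]; rfl
  rw [hd, hd, hd]
lemma coef (x y z : ℝ) : ∃ t : ℕ → ℕ → ℕ → ℤ, (∀ i < 17, ∀ j < 17, ∀ k < 17, ((dP i j k : ℕ) : ℤ) = t i j k + 2 ^ 254) ∧
    ESH x (1 - x) y (1 - y) z (1 - z) = ∑ i ∈ Finset.range 17, ∑ j ∈ Finset.range 17, ∑ k ∈ Finset.range 17,
      (t i j k : ℝ) * (x ^ i * (1 - x) ^ (16 - i) * (y ^ j * (1 - y) ^ (16 - j)) * (z ^ k * (1 - z) ^ (16 - k))) := by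
  obtain ⟨t, ht, hp⟩ := (ESH_Bd (R := ℤ × ℝ) (X1 := ((2:ℤ) ^ (256 * 289), x)) (Y1 := (1, 1 - x))
    (X2 := ((2:ℤ) ^ (256 * 17), y)) (Y2 := (1, 1 - y)) (X3 := ((2:ℤ) ^ 256, z)) (Y3 := (1, 1 - z))).ex
  refine ⟨t, ?_, ?_⟩
  · have h1 := congrArg (RingHom.fst ℤ ℝ) hp
    rw [map_ESH] at h1
    simp only [RingHom.coe_fst, ESH_one, Prod.fst_sum, Prod.fst_mul, Prod.pow_fst, one_pow, mul_one, Prod.fst_intCast, Int.cast_id] at h1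
    have h2 : PZ = pk3 256 fun i j k => (t i j k + ((2 ^ 254 : ℕ) : ℤ)).toNat := by
      rw [← kron 256 (2 ^ 254) t (fun i j k => (ht i j k).trans (by norm_num)) (by norm_num) (by norm_num)]
      unfold PZ offA
      rw [h1]
    intro i hi j hj k hk
    have h3 := ht i j k
    rw [dP, dP_eq _ _ _ _ hi hj hk, h2, pk3_dg 256 _ _ i j k hi hj hk]
    · rw [Int.toNat_of_nonneg (by omega)]; norm_num
    · intro i _ j _ k _; have := ht i j k; omega
  · have h1 := congrArg (RingHom.snd ℤ ℝ) hp
    rw [map_ESH] at h1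
    simpa only [RingHom.coe_snd, Prod.snd_sum, Prod.snd_mul, Prod.pow_snd, Prod.snd_intCast] using h1
lemma root_ok : rootOK = true := by decide +kernel
lemma bn_eq : ∀ i < 17, bn i = Nat.choose 16 i := by decide
noncomputable def GG (x y z : ℝ) : ℝ := -(ESH x (1 - x) y (1 - y) z (1 - z) + C3) / 2 ^ 17
lemma y0_le (i j k : ℕ) (hi : i < 17) (hj : j < 17) (hk : k < 17) (t : ℤ) (ht : ((dP i j k : ℕ) : ℤ) = t + 2 ^ 254) :
    0 < ctr i j k ∧ (y0 i j k : ℝ) ≤ 2 ^ 62 - (C3 + t / ctr i j k) / 2 ^ 17 := by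
  have h := allB_spec _ _ (allB_spec _ _ (allB_spec _ _ root_ok i hi) j hj) k hk
  rw [Bool.and_eq_true] at h
  have h1 := Nat.le_of_ble_eq_true h.1
  have h2 : 0 < ctr i j k := Nat.le_of_ble_eq_true h.2
  refine ⟨h2, ?_⟩
  have h3 : y0 i j k ≤ (zP i j k - dP i j k) / (2 ^ 17 * ctr i j k) := Nat.mod_le _ _
  have h4 : y0 i j k * (2 ^ 17 * ctr i j k) ≤ zP i j k - dP i j k := (Nat.le_div_iff_mul_le (by positivity)).1 h3
  have h5 : zP i j k = (2 ^ 79 - 147164688285696) * ctr i j k + 2 ^ 254 := rfl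
  have h6 : (y0 i j k : ℤ) * (2 ^ 17 * ctr i j k) ≤ (2 ^ 79 - 147164688285696) * ctr i j k - t := by
    zify [h1] at h4
    rw [h5] at h4
    push_cast at h4
    linarith
  have h7 : (y0 i j k : ℝ) * (2 ^ 17 * ctr i j k) ≤ (2 ^ 79 - 147164688285696) * ctr i j k - t := by exact_mod_cast h6
  have h8 : (0:ℝ) < ctr i j k := by exact_mod_cast h2
  have h9 : (C3 : ℝ) = 147164688285696 := by norm_num [C3]
  rw [h9]
  have : (2:ℝ) ^ 62 - (147164688285696 + t / ctr i j k) / 2 ^ 17 = ((2 ^ 79 - 147164688285696) * ctr i j k - t) / (2 ^ 17 * ctr i j k) := by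
    field_simp; ring
  rw [this, le_div_iff₀ (by positivity)]
  exact h7
lemma y0_lt (i j k : ℕ) : y0 i j k < 2 ^ 63 := Nat.mod_lt _ (by norm_num)
lemma dgY0 (q : ℕ) : dg Y0 q = if q < 4913 then y0 (q / 289) (q / 17 % 17) (q % 17) else 0 :=
  pk3_dg64 _ (fun i _ j _ k _ => (y0_lt i j k).trans (by norm_num)) q
lemma Y0_lt (q : ℕ) : dg Y0 q < 2 ^ 63 := by
  rw [dgY0]; split_ifs
  · exact y0_lt _ _ _
  · norm_num
lemma E_of (Y : ℕ) (f : ℕ → ℕ → ℕ → ℕ) (hY : ∀ q, dg Y q = if q < 4913 then f (q / 289) (q / 17 % 17) (q % 17) else 0) (x y z : ℝ) :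
    E (fun q => (dg Y q : ℝ)) x y z = Bn x fun i => Bn y fun j => Bn z fun k => (f i j k : ℝ) := by
  unfold E
  refine Bn_congr fun i hi => Bn_congr fun j hj => Bn_congr fun k hk => ?_
  dsimp only; rw [hY, if_pos (by omega)]
  congr 2 <;> omega
lemma low_G : Low GG (2 ^ 62) Y0 0 0 0 0 0 0 := by
  intro x y z hx hy hz
  have e : ∀ x, px 0 0 x = x := by intro x; simp [px]
  rw [e, e, e, E_of Y0 y0 dgY0]
  obtain ⟨t, ht, hp⟩ := coef x y z
  have h1 : (Bn x fun i => Bn y fun j => Bn z fun k => (y0 i j k : ℝ)) ≤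
      Bn x fun i => Bn y fun j => Bn z fun k => ((2:ℝ) ^ 62 - C3 / 2 ^ 17) + (-1 / 2 ^ 17) * ((t i j k : ℝ) / ctr i j k) := by
    refine Bn_mono hx.1 hx.2 fun i hi => Bn_mono hy.1 hy.2 fun j hj => Bn_mono hz.1 hz.2 fun k hk => ?_
    refine (y0_le i j k hi hj hk _ (ht i hi j hj k hk)).2.trans (le_of_eq ?_)
    ring
  simp only [Bn_add, Bn_smul, Bn_const] at h1
  have h2 : (Bn x fun i => Bn y fun j => Bn z fun k => (t i j k : ℝ) / ctr i j k) = ESH x (1 - x) y (1 - y) z (1 - z) := by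
    rw [hp]
    simp only [Bn, Finset.mul_sum]
    refine Finset.sum_congr rfl fun i hi => Finset.sum_congr rfl fun j hj => Finset.sum_congr rfl fun k hk => ?_
    rw [Finset.mem_range] at hi hj hk
    have h3 := (y0_le i j k hi hj hk _ (ht i hi j hj k hk)).1
    have h4 : ctr i j k = Nat.choose 16 i * Nat.choose 16 j * Nat.choose 16 k := by
      rw [← bn_eq i hi, ← bn_eq j hj, ← bn_eq k hk]; rfl
    have h5 : (ctr i j k : ℝ) = Nat.choose 16 i * Nat.choose 16 j * Nat.choose 16 k := by rw [h4]; push_cast; rfl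
    have h6 : (ctr i j k : ℝ) ≠ 0 := by positivity
    rw [mul_div_assoc', mul_div_assoc', mul_div_assoc', div_eq_iff h6, h5]
    unfold bb
    ring
  rw [h2] at h1
  unfold GG
  linarith
end root2
end Kiss

namespace Kiss
section det
noncomputable def DD (x y z : ℝ) : ℝ :=
  -(2:ℝ) ^ 27 * (8 + 2 * (3 * x - 2) * (3 * y - 2) * (3 * z - 2) - 2 * ((3 * x - 2) ^ 2 + (3 * y - 2) ^ 2 + (3 * z - 2) ^ 2))
lemma Bn_lin (x : ℝ) : Bn x (fun i => (3 * (i:ℝ) - 32)) = 16 * (3 * x - 2) := by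
  simp only [Bn, bb, Finset.sum_range_succ, Finset.sum_range_zero, Nat.choose]
  push_cast
  ring
lemma Bn_qd (x : ℝ) : Bn x (fun i => ((qd i : ℤ) : ℝ)) = 240 * (3 * x - 2) ^ 2 := by
  simp only [Bn, bb, qd, Finset.sum_range_succ, Finset.sum_range_zero, Nat.choose]
  push_cast
  ring
def n0OK : Bool := allB (fun i => allB (fun j => allB (fun k => decide (0 ≤ (2 ^ 33 + Int.fdiv (-(dn i j k) * 2 ^ 27) 61440))) 17) 17) 17
lemma n0_ok : n0OK = true := by decide +kernel
lemma n0_le (i j k : ℕ) (hi : i < 17) (hj : j < 17) (hk : k < 17) :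
    (n0 i j k : ℝ) ≤ 2 ^ 33 + (-(2:ℝ) ^ 27 / 61440) * (dn i j k : ℝ) := by
  have h := of_decide_eq_true (allB_spec _ _ (allB_spec _ _ (allB_spec _ _ n0_ok i hi) j hj) k hk)
  have h1 : n0 i j k ≤ (2 ^ 33 + Int.fdiv (-(dn i j k) * 2 ^ 27) 61440).toNat := Nat.mod_le _ _
  have h2 : (n0 i j k : ℤ) ≤ 2 ^ 33 + Int.fdiv (-(dn i j k) * 2 ^ 27) 61440 := by omega
  have h3 : Int.fdiv (-(dn i j k) * 2 ^ 27) 61440 * 61440 ≤ -(dn i j k) * 2 ^ 27 := by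
    rw [Int.fdiv_eq_ediv_of_nonneg _ (by norm_num)]
    exact Int.ediv_mul_le _ (by norm_num)
  have h4 : ((n0 i j k : ℤ) - 2 ^ 33) * 61440 ≤ -(dn i j k) * 2 ^ 27 := by linarith
  have h5 : ((n0 i j k : ℝ) - 2 ^ 33) * 61440 ≤ -(dn i j k) * 2 ^ 27 := by exact_mod_cast h4
  linarith
lemma n0_lt (i j k : ℕ) : n0 i j k < 2 ^ 34 := Nat.mod_lt _ (by norm_num)
lemma dgD0 (q : ℕ) : dg D0 q = if q < 4913 then n0 (q / 289) (q / 17 % 17) (q % 17) else 0 :=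
  pk3_dg64 _ (fun i _ j _ k _ => (n0_lt i j k).trans (by norm_num)) q
lemma D0_lt (q : ℕ) : dg D0 q < 2 ^ 34 := by
  rw [dgD0]; split_ifs
  · exact n0_lt _ _ _
  · norm_num
lemma low_D : Low DD (2 ^ 33) D0 0 0 0 0 0 0 := by
  intro x y z hx hy hz
  have e : ∀ x, px 0 0 x = x := by intro x; simp [px]
  rw [e, e, e, E_of D0 n0 dgD0]
  have h1 : (Bn x fun i => Bn y fun j => Bn z fun k => (n0 i j k : ℝ)) ≤
      Bn x fun i => Bn y fun j => Bn z fun k => 2 ^ 33 + (-(2:ℝ) ^ 27 / 61440) *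
        (8 * 61440 + (30 * ((3 * (i:ℝ) - 32) * ((3 * (j:ℝ) - 32) * (3 * (k:ℝ) - 32))) + (-512) * ((qd i : ℝ) + (qd j + qd k)))) := by
    refine Bn_mono hx.1 hx.2 fun i hi => Bn_mono hy.1 hy.2 fun j hj => Bn_mono hz.1 hz.2 fun k hk => ?_
    refine (n0_le i j k hi hj hk).trans (le_of_eq ?_)
    unfold dn
    push_cast
    ring
  have h2 : ∀ a : ℝ, Bn x (fun i => (3 * (i:ℝ) - 32) * a) = a * (16 * (3 * x - 2)) := by
    intro a; rw [← Bn_lin, ← Bn_smul]; simp only [mul_comm]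
  have h3 : ∀ a : ℝ, Bn y (fun i => (3 * (i:ℝ) - 32) * a) = a * (16 * (3 * y - 2)) := by
    intro a; rw [← Bn_lin, ← Bn_smul]; simp only [mul_comm]
  simp only [Bn_add, Bn_smul, Bn_const, Bn_lin, Bn_qd, h2, h3] at h1
  unfold DD
  refine le_trans (sub_le_sub_right h1 _) (le_of_eq ?_)
  ring
end det
end Kiss

namespace Kiss
section three
noncomputable def xu (u : ℝ) : ℝ := (u + 1) * 2 / 3
noncomputable def gf (f : List ℤ) (u : ℝ) : ℝ := krH (xu u) (1 - xu u) f / 2 ^ 12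
noncomputable def Gf (k : ℕ) : List (ℝ → ℝ) := (cF.getD k []).map gf
lemma dotL_Gf (u v : ℝ) (k : ℕ) : dotL u v (Gf k) = FH k (xu u) (1 - xu u) (xu v) (1 - xu v) / 2 ^ 24 := by
  unfold Gf FH
  generalize cF.getD k [] = l
  induction l with
  | nil => simp [dotL, dotH]
  | cons f l ih => rw [List.map_cons, dotL, ih, dotH, gf, gf]; ring
lemma E3H_TT (u v t : ℝ) : E3H (xu u) (1 - xu u) (xu v) (1 - xu v) (xu t) (1 - xu t) = 2 ^ 36 * TT Gf u v t := by
  unfold TT E3H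
  simp only [dotL_Gf, Finset.sum_range_succ, Finset.sum_range_zero]
  generalize FH 0 (xu u) (1 - xu u) (xu v) (1 - xu v) = F0
  generalize FH 1 (xu u) (1 - xu u) (xu v) (1 - xu v) = F1
  generalize FH 2 (xu u) (1 - xu u) (xu v) (1 - xu v) = F2
  generalize FH 3 (xu u) (1 - xu u) (xu v) (1 - xu v) = F3
  generalize FH 4 (xu u) (1 - xu u) (xu v) (1 - xu v) = F4
  generalize FH 5 (xu u) (1 - xu u) (xu v) (1 - xu v) = F5
  generalize FH 6 (xu u) (1 - xu u) (xu v) (1 - xu v) = F6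
  have hs : (2 * (xu t - 2 * (1 - xu t)) * (1 - xu u + xu u) * (1 - xu v + xu v) - (xu u - 2 * (1 - xu u)) * (xu v - 2 * (1 - xu v)) * (1 - xu t + xu t)) = 4 * (t - u * v) := by
    unfold xu; ring
  have hw : ((12 * (xu u * (1 - xu u)) + 3 * xu u ^ 2) * (12 * (xu v * (1 - xu v)) + 3 * xu v ^ 2) * (1 - xu t + xu t) ^ 2) = 16 * ((1 - u ^ 2) * (1 - v ^ 2)) := by
    unfold xu; ring
  have ho : 1 - xu t + xu t = 1 := by ring
  rw [hs, hw, ho]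
  generalize t - u * v = s
  generalize (1 - u ^ 2) * (1 - v ^ 2) = w
  simp only [Kf, lc, qL, EE, Finset.sum_range_succ, Finset.sum_range_zero, Nat.reduceDiv, Nat.reduceAdd, Nat.reduceMul, Nat.reduceSub,
    List.getD_cons_zero, List.getD_cons_succ]
  push_cast
  ring
lemma ch : chk treeF Y0 D0 0 0 0 0 0 0 = true := by decide +kernel
lemma h3 (u v t : ℝ) (hu : -1 ≤ u) (huv : u ≤ v) (hvt : v ≤ t) (ht : t ≤ 1/2) (hd : 0 ≤ 1+2*u*v*t-u^2-v^2-t^2) :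
    TT Gf u v t + TT Gf v t u + TT Gf t u v ≤ 3 * (-748518312 / 2 ^ 20) := by
  have h := chk_sound GG DD treeF Y0 D0 0 0 0 0 0 0 Y0_lt D0_lt low_G low_D ch (xu u) (xu v) (xu t)
    ⟨by unfold xu; linarith, by unfold xu; linarith⟩ ⟨by unfold xu; linarith, by unfold xu; linarith⟩
    ⟨by unfold xu; linarith, by unfold xu; linarith⟩ (Or.inl rfl) (Or.inl rfl) (Or.inl rfl)
  have e : ∀ x, px 0 0 x = x := by intro x; simp [px]
  simp only [e] at h
  have h1 := h (by unfold xu; linarith) (by unfold xu; linarith) (by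
    have : DD (xu u) (xu v) (xu t) = -2 ^ 30 * (1+2*u*v*t-u^2-v^2-t^2) := by unfold DD xu; ring
    rw [this]; nlinarith)
  unfold GG ESH at h1
  rw [E3H_TT, E3H_TT, E3H_TT] at h1
  have h9 : (C3 : ℝ) = 147164688285696 := by norm_num [C3]
  rw [h9, le_div_iff₀ (by positivity)] at h1
  linarith
end three
end Kiss

namespace Kiss
section univ
set_option exponentiation.threshold 2000
def PH {R : Type} [CommRing R] (F0 F1 F2 F3 F4 F5 F6 W U O : R) : R :=
  4096 * F0 + 1024 * W * F1 + 2560 * W ^ 2 * F2 + 640 * W ^ 3 * F3 + 640 * W ^ 4 * F4 + 32 * W ^ 5 * F5 + 112 * W ^ 6 * F6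
  + 536870912 * (O ^ 25 * (14111488 * U * O ^ 6 + 209193472 * U ^ 4 * O ^ 3 + 450281664 * U ^ 5 * O ^ 2 + 15914496 * U ^ 6 * O + 5536608 * U ^ 7 - 61115136 * O ^ 7 - 353415936 * U ^ 2 * O ^ 5 - 499062592 * U ^ 3 * O ^ 4))
def PhiH {R : Type} [CommRing R] (X Y : R) : R :=
  PH (FH 0 X Y X Y) (FH 1 X Y X Y) (FH 2 X Y X Y) (FH 3 X Y X Y) (FH 4 X Y X Y) (FH 5 X Y X Y) (FH 6 X Y X Y)
    (12 * (X * Y) + 3 * X ^ 2) (X - 2 * Y) (Y + X)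
def Psi {R : Type} [CommRing R] (p q : ℕ) (S T : R) : R :=
  PhiH ((p : R) * T + (q : R) * S) (((64 - p : ℕ) : R) * T + ((64 - q : ℕ) : R) * S)
def bk : List (ℕ × ℕ) := [(0,8),(8,12),(12,13),(13,14),(14,16),(16,24),(24,32),(32,40),(40,48),(48,52),(52,56),(56,60),(60,62),(62,64)]
def off1 : ℕ := pk 512 (fun _ => 2 ^ 510) 33
def P1 (p q : ℕ) : ℕ := (-(Psi p q ((2:ℤ) ^ 512) 1) + (off1 : ℤ)).toNat
def ok1 (p q : ℕ) : Bool := (fun y => allB (fun i => Nat.ble (2 ^ 510) (dgW 512 y i)) 33) (P1 p q)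
lemma ok1_all : ∀ r ∈ bk, ok1 r.1 r.2 = true := by decide +kernel

lemma krG_Bd {R : Type} [CommRing R] {X1 Y1 X2 Y2 X3 Y3 X Y : R} (hX : Bd X1 Y1 X2 Y2 X3 Y3 1 0 0 X 128)
    (hY : Bd X1 Y1 X2 Y2 X3 Y3 1 0 0 Y 128) (l : List ℤ) (n : ℕ) (hl : l.length = n + 1) :
    Bd X1 Y1 X2 Y2 X3 Y3 n 0 0 (krH X Y l) ((l.map Int.natAbs).sum * 128 ^ n) := by
  induction l generalizing n with
  | nil => simp at hl
  | cons c l ih =>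
    rw [krH, List.map_cons, List.sum_cons]
    have hn : l.length = n := by simpa using hl
    rw [hn, add_mul]
    have h1 : Bd X1 Y1 X2 Y2 X3 Y3 n 0 0 ((c : R) * Y ^ n) (c.natAbs * 128 ^ n) := by
      simpa using (Bd.smul c (hY.pow n) : Bd X1 Y1 X2 Y2 X3 Y3 _ _ _ _ _)
    refine h1.plus ?_
    cases n with
    | zero => rw [List.length_eq_zero_iff] at hn; subst hn; simp only [krH, mul_zero]; exact .zero _ _ _ _
    | succ n => exact (hX.mul (ih n hn)).cast (by omega) (by omega) (by omega) (le_of_eq (by ring))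
lemma dotG_Bd {R : Type} [CommRing R] {X1 Y1 X2 Y2 X3 Y3 X Y : R} (hX : Bd X1 Y1 X2 Y2 X3 Y3 1 0 0 X 128)
    (hY : Bd X1 Y1 X2 Y2 X3 Y3 1 0 0 Y 128) (l : List (List ℤ)) (n : ℕ)
    (hl : ∀ f ∈ l, f.length = n + 1 ∧ (f.map Int.natAbs).sum ≤ 2 ^ 50) :
    Bd X1 Y1 X2 Y2 X3 Y3 (n + n) 0 0 (dotH X Y X Y l) (l.length * (2 ^ 50 * 128 ^ n * (2 ^ 50 * 128 ^ n))) := by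
  induction l with
  | nil => exact .zero _ _ _ _
  | cons f l ih =>
    rw [dotH]
    have h1 := ih fun g hg => hl g (List.mem_cons_of_mem _ hg)
    obtain ⟨h2, h3⟩ := hl f List.mem_cons_self
    have h4 : Bd X1 Y1 X2 Y2 X3 Y3 n 0 0 (krH X Y f) (2 ^ 50 * 128 ^ n) :=
      (krG_Bd hX hY f n h2).mono (Nat.mul_le_mul_right _ h3)
    refine ((h4.mul h4).plus h1).cast rfl rfl rfl ?_
    rw [List.length_cons, add_mul, one_mul, add_comm]
lemma FG_Bd {R : Type} [CommRing R] {X1 Y1 X2 Y2 X3 Y3 X Y : R} (hX : Bd X1 Y1 X2 Y2 X3 Y3 1 0 0 X 128)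
    (hY : Bd X1 Y1 X2 Y2 X3 Y3 1 0 0 Y 128) (k : ℕ) (hk : k < 7) :
    Bd X1 Y1 X2 Y2 X3 Y3 (32 - 2 * k) 0 0 (FH k X Y X Y) (2 ^ 340) := by
  have h := lenOK_all k hk
  unfold lenOK at h
  rw [Bool.and_eq_true, List.all_eq_true] at h
  refine (dotG_Bd hX hY _ (16 - k) fun f hf => ?_).cast (by omega) rfl rfl ?_
  · have := h.2 f hf
    rw [Bool.and_eq_true] at this
    have h1 := Nat.eq_of_beq_eq_true this.1
    exact ⟨by omega, Nat.le_of_ble_eq_true this.2⟩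
  · have h2 : (cF.getD k []).length ≤ 64 := Nat.le_of_ble_eq_true h.1
    have h3 : 2 ^ 50 * 128 ^ (16 - k) ≤ 2 ^ 50 * 128 ^ 16 := Nat.mul_le_mul_left _ (Nat.pow_le_pow_right (by norm_num) (by omega))
    exact (Nat.mul_le_mul h2 (Nat.mul_le_mul h3 h3)).trans (by norm_num)
lemma PhiH_Bd {R : Type} [CommRing R] {X1 Y1 X2 Y2 X3 Y3 X Y : R} (hX : Bd X1 Y1 X2 Y2 X3 Y3 1 0 0 X 128)
    (hY : Bd X1 Y1 X2 Y2 X3 Y3 1 0 0 Y 128) : Bd X1 Y1 X2 Y2 X3 Y3 32 0 0 (PhiH X Y) (2 ^ 509) := by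
  have F0 := FG_Bd hX hY 0 (by omega)
  have F1 := FG_Bd hX hY 1 (by omega)
  have F2 := FG_Bd hX hY 2 (by omega)
  have F3 := FG_Bd hX hY 3 (by omega)
  have F4 := FG_Bd hX hY 4 (by omega)
  have F5 := FG_Bd hX hY 5 (by omega)
  have F6 := FG_Bd hX hY 6 (by omega)
  have hW := (Bd.smul 12 (hX.mul hY)).plus (Bd.smul 3 (hX.pow 2))
  have hU := hX.sub (Bd.smul 2 hY)
  have hO := hY.plus hX
  push_cast at hW hU
  unfold PhiH PH
  generalize (12 * (X * Y) + 3 * X ^ 2) = W at *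
  generalize X - 2 * Y = U at *
  generalize Y + X = O at *
  have t0 := Bd.smul 4096 F0
  have t1 := (Bd.smul 1024 hW).mul F1
  have t2 := (Bd.smul 2560 (hW.pow 2)).mul F2
  have t3 := (Bd.smul 640 (hW.pow 3)).mul F3
  have t4 := (Bd.smul 640 (hW.pow 4)).mul F4
  have t5 := (Bd.smul 32 (hW.pow 5)).mul F5
  have t6 := (Bd.smul 112 (hW.pow 6)).mul F6
  have b1 := (Bd.smul 14111488 hU).mul (hO.pow 6)
  have b4 := (Bd.smul 209193472 (hU.pow 4)).mul (hO.pow 3)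
  have b5 := (Bd.smul 450281664 (hU.pow 5)).mul (hO.pow 2)
  have b6 := (Bd.smul 15914496 (hU.pow 6)).mul hO
  have b7 := Bd.smul 5536608 (hU.pow 7)
  have b0 := Bd.smul 61115136 (hO.pow 7)
  have b2 := (Bd.smul 353415936 (hU.pow 2)).mul (hO.pow 5)
  have b3 := (Bd.smul 499062592 (hU.pow 3)).mul (hO.pow 4)
  have b := (((((((b1.plus b4).plus b5).plus b6).plus b7).sub b0).sub b2).sub b3)
  have := ((((((t0.plus t1).plus t2).plus t3).plus t4).plus t5).plus t6).plus (Bd.smul 536870912 ((hO.pow 25).mul b))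
  push_cast at this
  exact this.mono (by decide)
lemma Psi_Bd {R : Type} [CommRing R] {S T : R} (p q : ℕ) (hp : p ≤ 64) (hq : q ≤ 64) :
    Bd S T 1 1 1 1 32 0 0 (-(Psi p q S T)) (2 ^ 509) := by
  have hS : Bd S T 1 1 1 1 1 0 0 S 1 := .x1
  have hT : Bd S T 1 1 1 1 1 0 0 T 1 := .y1
  have h := Bd.smul (-1) (PhiH_Bd (((Bd.smul p hT).plus (Bd.smul q hS)).mono (B := 128) (by simp; omega))
    (((Bd.smul ((64 - p : ℕ) : ℤ) hT).plus (Bd.smul ((64 - q : ℕ) : ℤ) hS)).mono (B := 128) (by simp only [Int.natAbs_natCast]; omega)))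
  simp only [Int.cast_natCast, Int.cast_neg, Int.cast_one, neg_mul, one_mul, Int.natAbs_neg, Int.natAbs_one] at h
  exact h
lemma map_Psi {R S : Type} [CommRing R] [CommRing S] (φ : R →+* S) (p q : ℕ) (a b : R) :
    φ (Psi p q a b) = Psi p q (φ a) (φ b) := by
  simp only [Psi, PhiH, PH, FH, map_add, map_sub, map_mul, map_pow, map_ofNat, map_natCast, map_dotH]
lemma kron1 (w M : ℕ) (t : ℕ → ℤ) (h : ∀ i, (t i).natAbs ≤ M) (hw : 2 * M < 2 ^ w) (hM : M < 2 ^ w) :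
    (∑ i ∈ Finset.range 33, t i * ((2:ℤ) ^ w) ^ i + ((pk w (fun _ => M) 33 : ℕ) : ℤ)).toNat
    = pk w (fun i => (t i + M).toNat) 33 := by
  have e : ∀ i, (((t i + M).toNat : ℕ) : ℤ) = t i + M := by
    intro i; have := h i; omega
  have l : ∀ i, (t i + M).toNat < 2 ^ w := by
    intro i; have := h i; omega
  rw [← Int.toNat_natCast (pk w (fun i => (t i + M).toNat) 33)]
  congr 1
  rw [pk_sum w _ _ fun i _ => l i, pk_sum w _ _ fun i _ => hM]
  push_cast [e, pow_mul]
  simp only [← Finset.sum_add_distrib, ← add_mul]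
lemma Psi_neg (p q : ℕ) (hp : p ≤ 64) (hq : q ≤ 64) (ok : ok1 p q = true) (S T : ℝ) (hS : 0 ≤ S) (hT : 0 ≤ T) :
    Psi p q S T ≤ 0 := by
  obtain ⟨t, ht, hs⟩ := (Psi_Bd (R := ℤ × ℝ) (S := ((2:ℤ) ^ 512, S)) (T := (1, T)) p q hp hq).ex
  have h2 : P1 p q = pk 512 (fun i => (t i 0 0 + ((2 ^ 510 : ℕ) : ℤ)).toNat) 33 := by
    have h1 := congrArg (RingHom.fst ℤ ℝ) hs
    rw [map_neg, map_Psi] at h1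
    simp only [RingHom.coe_fst, Prod.fst_sum, Prod.fst_mul, Prod.pow_fst, one_pow, mul_one, Prod.fst_intCast, Int.cast_id,
      zero_add, Finset.sum_range_one] at h1
    rw [← kron1 512 (2 ^ 510) (fun i => t i 0 0) (fun i => (ht i 0 0).trans (by norm_num)) (by norm_num) (by norm_num)]
    unfold P1 off1
    rw [h1]
  have h3 : ∀ i < 33, 0 ≤ t i 0 0 := by
    intro i hi
    have h4 := Nat.le_of_ble_eq_true (allB_spec _ _ ok i hi)
    have hd : ∀ w y q, dgW w y q = y / 2 ^ (w * q) % 2 ^ w := fun w y q => by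
      rw [← Nat.shiftRight_eq_div_pow]; rfl
    rw [hd, h2, pk_dg _ _ _ _ i hi] at h4
    · have := ht i 0 0; omega
    · intro i _; have := ht i 0 0; omega
  have h1 := congrArg (RingHom.snd ℤ ℝ) hs
  rw [map_neg, map_Psi] at h1
  simp only [RingHom.coe_snd, Prod.snd_sum, Prod.snd_mul, Prod.pow_snd, Prod.snd_one, one_pow, mul_one, Prod.snd_intCast,
      zero_add, Finset.sum_range_one] at h1
  have : 0 ≤ -Psi p q S T := by
    rw [h1]
    refine Finset.sum_nonneg fun i hi => ?_
    have := h3 i (Finset.mem_range.1 hi)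
    have : (0:ℝ) ≤ t i 0 0 := by exact_mod_cast this
    positivity
  linarith
lemma krH_scale (c x y : ℝ) (l : List ℤ) (n : ℕ) (hl : l.length = n + 1) : krH (c * x) (c * y) l = c ^ n * krH x y l := by
  induction l generalizing n with
  | nil => simp at hl
  | cons a l ih =>
    have hn : l.length = n := by simpa using hl
    rw [krH, krH, hn]
    cases n with
    | zero => rw [List.length_eq_zero_iff] at hn; subst hn; simp [krH]
    | succ n => rw [ih n hn]; ring
lemma FH_scale (c x y : ℝ) (k : ℕ) (hk : k < 7) : FH k (c * x) (c * y) (c * x) (c * y) = c ^ (2 * (16 - k)) * FH k x y x y := by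
  have h := lenOK_all k hk
  unfold lenOK at h
  rw [Bool.and_eq_true, List.all_eq_true] at h
  have h := h.2
  unfold FH
  generalize cF.getD k [] = l at h
  induction l with
  | nil => simp [dotH]
  | cons f l ih =>
    have h1 := h f List.mem_cons_self
    rw [Bool.and_eq_true] at h1
    have h1 := Nat.eq_of_beq_eq_true h1.1
    rw [dotH, dotH, ih fun g hg => h g (List.mem_cons_of_mem _ hg), krH_scale c x y f (16 - k) (by omega)]
    ring
lemma PhiH_scale (c x y : ℝ) : PhiH (c * x) (c * y) = c ^ 32 * PhiH x y := by
  unfold PhiH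
  rw [FH_scale c x y 0 (by omega), FH_scale c x y 1 (by omega), FH_scale c x y 2 (by omega), FH_scale c x y 3 (by omega),
    FH_scale c x y 4 (by omega), FH_scale c x y 5 (by omega), FH_scale c x y 6 (by omega)]
  unfold PH
  generalize FH 0 x y x y = F0
  generalize FH 1 x y x y = F1
  generalize FH 2 x y x y = F2
  generalize FH 3 x y x y = F3
  generalize FH 4 x y x y = F4
  generalize FH 5 x y x y = F5
  generalize FH 6 x y x y = F6
  have e1 : 12 * (c * x * (c * y)) + 3 * (c * x) ^ 2 = c ^ 2 * (12 * (x * y) + 3 * x ^ 2) := by ring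
  have e2 : c * x - 2 * (c * y) = c * (x - 2 * y) := by ring
  have e3 : c * y + c * x = c * (y + x) := by ring
  rw [e1, e2, e3]
  generalize 12 * (x * y) + 3 * x ^ 2 = W
  generalize x - 2 * y = U
  generalize y + x = O
  norm_num only
  ring
lemma Phi_int (p q : ℕ) (hpq : p < q) (hq : q ≤ 64) (ok : ok1 p q = true) (x : ℝ) (h1 : (p:ℝ) / 64 ≤ x) (h2 : x ≤ (q:ℝ) / 64) :
    PhiH x (1 - x) ≤ 0 := by
  have h := Psi_neg p q (by omega) hq ok (64 * x - p) (q - 64 * x) (by linarith) (by linarith)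
  unfold Psi at h
  have hc : (0:ℝ) < 64 * (q - p) := by
    have : (p:ℝ) < q := by exact_mod_cast hpq
    linarith
  have e1 : (p:ℝ) * (q - 64 * x) + q * (64 * x - p) = (64 * (q - p)) * x := by ring
  have e2 : ((64 - p : ℕ) : ℝ) * (q - 64 * x) + ((64 - q : ℕ) : ℝ) * (64 * x - p) = (64 * (q - p)) * (1 - x) := by
    rw [Nat.cast_sub (by omega), Nat.cast_sub hq]; push_cast; ring
  rw [e1, e2, PhiH_scale] at h
  by_contra hn
  push Not at hn
  have := mul_pos (pow_pos hc 32) hn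
  linarith
lemma Phi_neg (x : ℝ) (h0 : 0 ≤ x) (h1 : x ≤ 1) : PhiH x (1 - x) ≤ 0 := by
  have key : ∀ p q : ℕ, (p, q) ∈ bk → p < q → q ≤ 64 → (p:ℝ) / 64 ≤ x → x ≤ (q:ℝ) / 64 → PhiH x (1 - x) ≤ 0 :=
    fun p q hm a b => Phi_int p q a b (ok1_all (p, q) hm) x
  have st : ∀ p q : ℕ, (p, q) ∈ bk → p < q → q ≤ 64 → (p:ℝ) / 64 ≤ x → ((q:ℝ) / 64 ≤ x → PhiH x (1 - x) ≤ 0) → PhiH x (1 - x) ≤ 0 := by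
    intro p q hm a b hp hq
    rcases le_total x ((q:ℝ) / 64) with h | h
    · exact key p q hm a b hp h
    · exact hq h
  refine st 0 8 (by decide) (by omega) (by omega) (by simpa using h0) fun h => ?_
  refine st 8 12 (by decide) (by omega) (by omega) h fun h => ?_
  refine st 12 13 (by decide) (by omega) (by omega) h fun h => ?_
  refine st 13 14 (by decide) (by omega) (by omega) h fun h => ?_
  refine st 14 16 (by decide) (by omega) (by omega) h fun h => ?_
  refine st 16 24 (by decide) (by omega) (by omega) h fun h => ?_
  refine st 24 32 (by decide) (by omega) (by omega) h fun h => ?_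
  refine st 32 40 (by decide) (by omega) (by omega) h fun h => ?_
  refine st 40 48 (by decide) (by omega) (by omega) h fun h => ?_
  refine st 48 52 (by decide) (by omega) (by omega) h fun h => ?_
  refine st 52 56 (by decide) (by omega) (by omega) h fun h => ?_
  refine st 56 60 (by decide) (by omega) (by omega) h fun h => ?_
  refine st 60 62 (by decide) (by omega) (by omega) h fun h => ?_
  exact key 62 64 (by decide) (by omega) (by omega) h (by norm_num; exact h1)
set_option maxRecDepth 100000 in
lemma Phi_eq (u : ℝ) : PhiH (xu u) (1 - xu u) = 2 ^ 36 * (AA u + TT Gf u u 1 - 886462) := by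
  unfold TT PhiH AA
  simp only [dotL_Gf, Finset.sum_range_succ, Finset.sum_range_zero]
  generalize FH 0 (xu u) (1 - xu u) (xu u) (1 - xu u) = F0
  generalize FH 1 (xu u) (1 - xu u) (xu u) (1 - xu u) = F1
  generalize FH 2 (xu u) (1 - xu u) (xu u) (1 - xu u) = F2
  generalize FH 3 (xu u) (1 - xu u) (xu u) (1 - xu u) = F3
  generalize FH 4 (xu u) (1 - xu u) (xu u) (1 - xu u) = F4
  generalize FH 5 (xu u) (1 - xu u) (xu u) (1 - xu u) = F5
  generalize FH 6 (xu u) (1 - xu u) (xu u) (1 - xu u) = F6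
  have hw : 12 * (xu u * (1 - xu u)) + 3 * xu u ^ 2 = 4 * (1 - u ^ 2) := by unfold xu; ring
  have hu : xu u - 2 * (1 - xu u) = 2 * u := by unfold xu; ring
  have ho : 1 - xu u + xu u = 1 := by ring
  have hs : 1 - u * u = 1 - u ^ 2 := by ring
  rw [hw, hu, ho, hs]
  generalize 1 - u ^ 2 = s
  simp only [Kf, lc, qL, pL, aL, PH, Finset.sum_range_succ, Finset.sum_range_zero, Nat.reduceDiv, Nat.reduceAdd, Nat.reduceMul, Nat.reduceSub,
    List.getD_cons_zero, List.getD_cons_succ]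
  push_cast
  ring
lemma h2 (u : ℝ) (hu : -1 ≤ u) (hu' : u ≤ 1/2) : AA u + TT Gf u u 1 ≤ 886462 := by
  have h := Phi_neg (xu u) (by unfold xu; linarith) (by unfold xu; linarith)
  rw [Phi_eq] at h
  by_contra hn
  push Not at hn
  have : 0 < (2:ℝ) ^ 36 * (AA u + TT Gf u u 1 - 886462) := by
    apply mul_pos (by positivity); linarith
  linarith
lemma hnum : AA 1 + 1357 * 886462 + 1357 * 1356 * (-748518312 / 2 ^ 20) < 0 := by
  simp only [AA, Kf, lc, pL, aL, Finset.sum_range_succ, Finset.sum_range_zero, Nat.reduceDiv, Nat.reduceAdd, Nat.reduceMul, Nat.reduceSub,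
    List.getD_cons_zero, List.getD_cons_succ]
  push_cast
  norm_num
end univ
end Kiss
theorem kissing_number_dim12_le_1357 (S : Finset (EuclideanSpace ℝ (Fin 12)))
    (hnorm : ∀ x ∈ S, ‖x‖ = 1)
    (hdist : ∀ x ∈ S, ∀ y ∈ S, x ≠ y → 1 ≤ dist x y) :
    S.card ≤ 1357 :=
  Kiss.main_sum Kiss.Gf _ _ Kiss.h2 Kiss.h3 Kiss.hnum S hnorm hdist
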